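/- For every distortion pair (d1,d2) ∈ ℝ₊², the common-reconstruction rate-distortion function satisfies R_CR(d1,d2) = min over p_{X̂Ŷ|XY} ∈ 𝒫_{X̂Ŷ|XY}(d1,d2) of max{ I(X;X̂,Ŷ|Y), I(Y;X̂,Ŷ|X) }, where the mutual informations are computed under the joint law q_{XY}(x,y)·p_{X̂Ŷ|XY}(x̂,ŷ|x,y). -/

import Mathlib

open scoped BigOperators Classical

noncomputable section

namespace TWR

/-- Base-2 Shannon entropy of a finitely supported distribution (with the
convention `0 * log 0 = 0`, automatic since `Real.logb 2 0 = 0`). -/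
def H2 {α : Type} [Fintype α] (p : α → ℝ) : ℝ :=
  -∑ a, p a * Real.logb 2 (p a)

/-- `p` is a probability mass function. -/
def IsPmf {α : Type} [Fintype α] (p : α → ℝ) : Prop :=
  (∀ a, 0 ≤ p a) ∧ ∑ a, p a = 1

/-- `W` is a conditional pmf. -/
def IsCondPmf {α β : Type} [Fintype β] (W : α → β → ℝ) : Prop :=
  ∀ a, IsPmf (W a)

/-- Mutual information `I(A;B)` (base 2) of a joint pmf on `α × β`. -/
def MI {α β : Type} [Fintype α] [Fintype β] (p : α × β → ℝ) : ℝ :=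
  H2 (fun a => ∑ b, p (a, b)) + H2 (fun b => ∑ a, p (a, b)) - H2 p

/-- Conditional entropy `H(A|B)` of a joint pmf on `α × β`. -/
def condH {α β : Type} [Fintype α] [Fintype β] (p : α × β → ℝ) : ℝ :=
  H2 p - H2 (fun b => ∑ a, p (a, b))

/-- Conditional mutual information `I(A;C|B)` of a joint pmf on `α × β × γ`,
conditioning on the middle coordinate (`I(A;C|B) = H(A,B)+H(B,C)-H(A,B,C)-H(B)`). -/
def condMI {α β γ : Type} [Fintype α] [Fintype β] [Fintype γ] (p : α × β × γ → ℝ) : ℝ :=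
  H2 (fun ab : α × β => ∑ c, p (ab.1, ab.2, c)) +
    H2 (fun bc : β × γ => ∑ a, p (a, bc.1, bc.2)) -
    H2 p - H2 (fun b : β => ∑ a, ∑ c, p (a, b, c))

/-- Markov chain `A − B − C` for a joint pmf on `α × β × γ`. -/
def Markov {α β γ : Type} [Fintype α] [Fintype β] [Fintype γ] (p : α × β × γ → ℝ) : Prop :=
  ∀ a b c, p (a, b, c) * (∑ a', ∑ c', p (a', b, c')) =
    (∑ c', p (a, b, c')) * (∑ a', p (a', b, c))

variable {𝒳 𝒴 Xh Yh 𝒲 𝒰 𝒱 : Type}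
variable [Fintype 𝒳] [Fintype 𝒴] [Fintype Xh] [Fintype Yh]
variable [Fintype 𝒲] [Fintype 𝒰] [Fintype 𝒱]

/-- The i.i.d. block source. -/
def iid (q : 𝒳 × 𝒴 → ℝ) (n : ℕ) : (Fin n → 𝒳) × (Fin n → 𝒴) → ℝ :=
  fun xy => ∏ i, q (xy.1 i, xy.2 i)

/-- Average distortion at receiver 1 of the RD code `(f, g1, ·)`. -/
def Delta1 (q : 𝒳 × 𝒴 → ℝ) (δ1 : 𝒳 → Xh → ℝ) {n m : ℕ}
    (f : (Fin n → 𝒳) × (Fin n → 𝒴) → Fin m)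
    (g1 : Fin m × (Fin n → 𝒴) → Fin n → Xh) : ℝ :=
  ∑ xy : (Fin n → 𝒳) × (Fin n → 𝒴),
    iid q n xy * ((n : ℝ)⁻¹ * ∑ i, δ1 (xy.1 i) (g1 (f xy, xy.2) i))

/-- Average distortion at receiver 2 of the RD code `(f, ·, g2)`. -/
def Delta2 (q : 𝒳 × 𝒴 → ℝ) (δ2 : 𝒴 → Yh → ℝ) {n m : ℕ}
    (f : (Fin n → 𝒳) × (Fin n → 𝒴) → Fin m)
    (g2 : Fin m × (Fin n → 𝒳) → Fin n → Yh) : ℝ :=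
  ∑ xy : (Fin n → 𝒳) × (Fin n → 𝒴),
    iid q n xy * ((n : ℝ)⁻¹ * ∑ i, δ2 (xy.2 i) (g2 (f xy, xy.1) i))

/-- `r` is a `(d1,d2)`-achievable rate (source coding). -/
def RDAchievable (q : 𝒳 × 𝒴 → ℝ) (δ1 : 𝒳 → Xh → ℝ) (δ2 : 𝒴 → Yh → ℝ)
    (d1 d2 r : ℝ) : Prop :=
  ∀ ε > (0 : ℝ), ∃ (n m : ℕ) (f : (Fin n → 𝒳) × (Fin n → 𝒴) → Fin m)
    (g1 : Fin m × (Fin n → 𝒴) → Fin n → Xh)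
    (g2 : Fin m × (Fin n → 𝒳) → Fin n → Yh),
    0 < n ∧ Real.logb 2 m / n ≤ r + ε ∧
    Delta1 q δ1 f g1 ≤ d1 + ε ∧ Delta2 q δ2 f g2 ≤ d2 + ε

/-- The rate-distortion function `R(d1,d2)`. -/
def RD (q : 𝒳 × 𝒴 → ℝ) (δ1 : 𝒳 → Xh → ℝ) (δ2 : 𝒴 → Yh → ℝ) (d1 d2 : ℝ) : ℝ :=
  sInf {r : ℝ | 0 ≤ r ∧ RDAchievable q δ1 δ2 d1 d2 r}

/-- `r` is `(d1,d2)`-achievable with common reconstructions. -/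
def CRAchievable (q : 𝒳 × 𝒴 → ℝ) (δ1 : 𝒳 → Xh → ℝ) (δ2 : 𝒴 → Yh → ℝ)
    (d1 d2 r : ℝ) : Prop :=
  ∀ ε > (0 : ℝ), ∃ (n m : ℕ) (f : (Fin n → 𝒳) × (Fin n → 𝒴) → Fin m)
    (g1 : Fin m × (Fin n → 𝒴) → Fin n → Xh)
    (g2 : Fin m × (Fin n → 𝒳) → Fin n → Yh)
    (φ1 : Fin m × (Fin n → 𝒴) → Fin n → Yh)
    (φ2 : Fin m × (Fin n → 𝒳) → Fin n → Xh),
    0 < n ∧ Real.logb 2 m / n ≤ r + ε ∧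
    Delta1 q δ1 f g1 ≤ d1 + ε ∧ Delta2 q δ2 f g2 ≤ d2 + ε ∧
    (∑ xy : (Fin n → 𝒳) × (Fin n → 𝒴),
      if φ2 (f xy, xy.1) = g1 (f xy, xy.2) then 0 else iid q n xy) ≤ ε ∧
    (∑ xy : (Fin n → 𝒳) × (Fin n → 𝒴),
      if φ1 (f xy, xy.2) = g2 (f xy, xy.1) then 0 else iid q n xy) ≤ ε

/-- The common-reconstruction rate-distortion function `R_CR(d1,d2)`. -/
def CRRD (q : 𝒳 × 𝒴 → ℝ) (δ1 : 𝒳 → Xh → ℝ) (δ2 : 𝒴 → Yh → ℝ) (d1 d2 : ℝ) : ℝ :=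
  sInf {r : ℝ | 0 ≤ r ∧ CRAchievable q δ1 δ2 d1 d2 r}

/-- The conditional rate-distortion function `R_{X|Y}(d1)`. -/
def condRD (q : 𝒳 × 𝒴 → ℝ) (δ1 : 𝒳 → Xh → ℝ) (d1 : ℝ) : ℝ :=
  sInf {r : ℝ | ∃ W : 𝒳 × 𝒴 → Xh → ℝ, IsCondPmf W ∧
    (∑ x, ∑ y, ∑ xh, q (x, y) * W (x, y) xh * δ1 x xh) ≤ d1 ∧
    r = condMI (fun t : 𝒳 × 𝒴 × Xh => q (t.1, t.2.1) * W (t.1, t.2.1) t.2.2)}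

/-- Swap the two components of a joint source. -/
def swap (q : 𝒳 × 𝒴 → ℝ) : 𝒴 × 𝒳 → ℝ := fun t => q (t.2, t.1)

/-- The marginal rate-distortion function `R_X(d)`. -/
def margRD (qX : 𝒳 → ℝ) (δ1 : 𝒳 → Xh → ℝ) (d1 : ℝ) : ℝ :=
  sInf {r : ℝ | ∃ W : 𝒳 → Xh → ℝ, IsCondPmf W ∧
    (∑ x, ∑ xh, qX x * W x xh * δ1 x xh) ≤ d1 ∧
    r = MI (fun t : 𝒳 × Xh => qX t.1 * W t.1 t.2)}

def margX (q : 𝒳 × 𝒴 → ℝ) : 𝒳 → ℝ := fun x => ∑ y, q (x, y)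
def margY (q : 𝒳 × 𝒴 → ℝ) : 𝒴 → ℝ := fun y => ∑ x, q (x, y)

/-- The joint rate-distortion function `R_{XY}(d1,d2)`. -/
def jointRD (q : 𝒳 × 𝒴 → ℝ) (δ1 : 𝒳 → Xh → ℝ) (δ2 : 𝒴 → Yh → ℝ) (d1 d2 : ℝ) : ℝ :=
  sInf {r : ℝ | ∃ W : 𝒳 × 𝒴 → Xh × Yh → ℝ, IsCondPmf W ∧
    (∑ xy : 𝒳 × 𝒴, ∑ z : Xh × Yh, q xy * W xy z * δ1 xy.1 z.1) ≤ d1 ∧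
    (∑ xy : 𝒳 × 𝒴, ∑ z : Xh × Yh, q xy * W xy z * δ2 xy.2 z.2) ≤ d2 ∧
    r = MI (fun t : (𝒳 × 𝒴) × (Xh × Yh) => q t.1 * W t.1 t.2)}

/-- The Wyner–Ziv rate-distortion function `R^{WZ}_{X|Y}(d1)`
(with auxiliary alphabet of cardinality `|𝒳| + 1`). -/
def wzRD (q : 𝒳 × 𝒴 → ℝ) (δ1 : 𝒳 → Xh → ℝ) (d1 : ℝ) : ℝ :=
  sInf {r : ℝ | ∃ p : Fin (Fintype.card 𝒳 + 1) × 𝒳 × 𝒴 → ℝ, IsPmf p ∧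
    (∀ x y, (∑ a, p (a, x, y)) = q (x, y)) ∧ Markov p ∧
    (∃ π1 : Fin (Fintype.card 𝒳 + 1) × 𝒴 → Xh,
      (∑ a, ∑ x, ∑ y, p (a, x, y) * δ1 x (π1 (a, y))) ≤ d1) ∧
    r = condMI (fun t : 𝒳 × 𝒴 × Fin (Fintype.card 𝒳 + 1) => p (t.2.2, t.1, t.2.1))}

/-- The set over which the single-letter CR formula
`max{I(X;X̂,Ŷ|Y), I(Y;X̂,Ŷ|X)}` is minimised. -/
def crFormulaSet (q : 𝒳 × 𝒴 → ℝ) (δ1 : 𝒳 → Xh → ℝ) (δ2 : 𝒴 → Yh → ℝ)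
    (d1 d2 : ℝ) : Set ℝ :=
  {r : ℝ | ∃ W : 𝒳 × 𝒴 → Xh × Yh → ℝ, IsCondPmf W ∧
    (∑ x, ∑ y, ∑ z : Xh × Yh, q (x, y) * W (x, y) z * δ1 x z.1) ≤ d1 ∧
    (∑ x, ∑ y, ∑ z : Xh × Yh, q (x, y) * W (x, y) z * δ2 y z.2) ≤ d2 ∧
    r = max
      (condMI (fun t : 𝒳 × 𝒴 × (Xh × Yh) => q (t.1, t.2.1) * W (t.1, t.2.1) t.2.2))
      (condMI (fun t : 𝒴 × 𝒳 × (Xh × Yh) => q (t.2.1, t.1) * W (t.2.1, t.1) t.2.2))}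

/-- Joint law of source blocks and channel outputs for a JSC encoder. -/
def jscP (q : 𝒳 × 𝒴 → ℝ) (qUV : 𝒲 → 𝒰 × 𝒱 → ℝ) {n m : ℕ}
    (f : (Fin n → 𝒳) × (Fin n → 𝒴) → Fin m → 𝒲)
    (x : Fin n → 𝒳) (y : Fin n → 𝒴) (u : Fin m → 𝒰) (v : Fin m → 𝒱) : ℝ :=
  (∏ i, q (x i, y i)) * ∏ j, qUV (f (x, y) j) (u j, v j)

/-- `(d1,d2)` is achievable by joint source-channel coding with source rate `κs`
and channel rate `κc` (bandwidth expansion `κc/κs`). -/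
def JSCAchievable (q : 𝒳 × 𝒴 → ℝ) (qUV : 𝒲 → 𝒰 × 𝒱 → ℝ)
    (δ1 : 𝒳 → Xh → ℝ) (δ2 : 𝒴 → Yh → ℝ) (κs κc d1 d2 : ℝ) : Prop :=
  ∀ ε > (0 : ℝ), ∃ (t n m : ℕ) (f : (Fin n → 𝒳) × (Fin n → 𝒴) → Fin m → 𝒲)
    (g1 : (Fin m → 𝒰) × (Fin n → 𝒴) → Fin n → Xh)
    (g2 : (Fin m → 𝒱) × (Fin n → 𝒳) → Fin n → Yh),
    0 < t ∧ (n : ℝ) = κs * t ∧ (m : ℝ) = κc * t ∧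
    (∑ x : Fin n → 𝒳, ∑ y : Fin n → 𝒴, ∑ u : Fin m → 𝒰, ∑ v : Fin m → 𝒱,
      jscP q qUV f x y u v * ((n : ℝ)⁻¹ * ∑ i, δ1 (x i) (g1 (u, y) i))) ≤ d1 + ε ∧
    (∑ x : Fin n → 𝒳, ∑ y : Fin n → 𝒴, ∑ u : Fin m → 𝒰, ∑ v : Fin m → 𝒱,
      jscP q qUV f x y u v * ((n : ℝ)⁻¹ * ∑ i, δ2 (y i) (g2 (v, x) i))) ≤ d2 + ε

/-- `(d1,d2)` is achievable by joint source-channel coding with common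
reconstructions, source rate `κs` and channel rate `κc`. -/
def CRJSCAchievable (q : 𝒳 × 𝒴 → ℝ) (qUV : 𝒲 → 𝒰 × 𝒱 → ℝ)
    (δ1 : 𝒳 → Xh → ℝ) (δ2 : 𝒴 → Yh → ℝ) (κs κc d1 d2 : ℝ) : Prop :=
  ∀ ε > (0 : ℝ), ∃ (t n m : ℕ) (f : (Fin n → 𝒳) × (Fin n → 𝒴) → Fin m → 𝒲)
    (g1 : (Fin m → 𝒰) × (Fin n → 𝒴) → Fin n → Xh)
    (g2 : (Fin m → 𝒱) × (Fin n → 𝒳) → Fin n → Yh)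
    (φ1 : (Fin m → 𝒰) × (Fin n → 𝒴) → Fin n → Yh)
    (φ2 : (Fin m → 𝒱) × (Fin n → 𝒳) → Fin n → Xh),
    0 < t ∧ (n : ℝ) = κs * t ∧ (m : ℝ) = κc * t ∧
    (∑ x : Fin n → 𝒳, ∑ y : Fin n → 𝒴, ∑ u : Fin m → 𝒰, ∑ v : Fin m → 𝒱,
      jscP q qUV f x y u v * ((n : ℝ)⁻¹ * ∑ i, δ1 (x i) (g1 (u, y) i))) ≤ d1 + ε ∧
    (∑ x : Fin n → 𝒳, ∑ y : Fin n → 𝒴, ∑ u : Fin m → 𝒰, ∑ v : Fin m → 𝒱,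
      jscP q qUV f x y u v * ((n : ℝ)⁻¹ * ∑ i, δ2 (y i) (g2 (v, x) i))) ≤ d2 + ε ∧
    (∑ x : Fin n → 𝒳, ∑ y : Fin n → 𝒴, ∑ u : Fin m → 𝒰, ∑ v : Fin m → 𝒱,
      if φ2 (v, x) = g1 (u, y) then 0 else jscP q qUV f x y u v) ≤ ε ∧
    (∑ x : Fin n → 𝒳, ∑ y : Fin n → 𝒴, ∑ u : Fin m → 𝒰, ∑ v : Fin m → 𝒱,
      if φ1 (u, y) = g2 (v, x) then 0 else jscP q qUV f x y u v) ≤ ε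

/-- `I(W;U)` under the joint law `pW · qUV` (U-marginal of the broadcast channel). -/
def chMIU (qUV : 𝒲 → 𝒰 × 𝒱 → ℝ) (pW : 𝒲 → ℝ) : ℝ :=
  MI (fun t : 𝒲 × 𝒰 => pW t.1 * ∑ v, qUV t.1 (t.2, v))

/-- `I(W;V)` under the joint law `pW · qUV` (V-marginal of the broadcast channel). -/
def chMIV (qUV : 𝒲 → 𝒰 × 𝒱 → ℝ) (pW : 𝒲 → ℝ) : ℝ :=
  MI (fun t : 𝒲 × 𝒱 => pW t.1 * ∑ u, qUV t.1 (u, t.2))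

/-- The doubly symmetric binary source with crossover probability `ρ`. -/
def dsbs (ρ : ℝ) : Bool × Bool → ℝ :=
  fun t => if t.1 = t.2 then (1 - ρ) / 2 else ρ / 2

/-- The Hamming distortion measure. -/
def dHam {α : Type} : α → α → ℝ := fun a b => if a = b then 0 else 1

/-- The binary entropy function (base 2). -/
def binEnt (x : ℝ) : ℝ := -(x * Real.logb 2 x) - (1 - x) * Real.logb 2 (1 - x)

/-- A difference distortion measure built from a per-letter function of the
(modular) difference. -/
def diffD {l : ℕ} (δ : Fin l → ℝ) : Fin l → Fin l → ℝ := fun a b => δ (a - b)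

/-- Capacity of the modulo-additive channel with noise `pN` and input
distortion constraint `d`. -/
def Cadd {l : ℕ} (δ : Fin l → ℝ) (d : ℝ) (pN : Fin l → ℝ) : ℝ :=
  sSup {r : ℝ | ∃ pW : Fin l → ℝ, IsPmf pW ∧ (∑ w, pW w * δ w) ≤ d ∧
    r = MI (fun t : Fin l × Fin l => pW t.1 * pN (t.2 - t.1))}

/-- The minimax (worst-noise) capacity under distortion constraint `d`. -/
def Cworst {l : ℕ} (δ : Fin l → ℝ) (d : ℝ) : ℝ :=
  sInf {r : ℝ | ∃ pN : Fin l → ℝ, IsPmf pN ∧ (∑ x, pN x * δ x) ≤ d ∧ r = Cadd δ d pN}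

/-- Wyner's common information `K(X;Y)` (auxiliary alphabet of size 4). -/
def wynerK (q : 𝒳 × 𝒴 → ℝ) : ℝ :=
  sInf {r : ℝ | ∃ W : 𝒳 × 𝒴 → Fin 4 → ℝ, IsCondPmf W ∧
    Markov (fun t : 𝒳 × Fin 4 × 𝒴 => q (t.1, t.2.2) * W (t.1, t.2.2) t.2.1) ∧
    r = MI (fun t : (𝒳 × 𝒴) × Fin 4 => q t.1 * W t.1 t.2)}

/-- The one-description (Kimura–Uyematsu) upper bound `R_U*(d1,d2)`. -/
def oneDescUB (q : 𝒳 × 𝒴 → ℝ) (δ1 : 𝒳 → Xh → ℝ) (δ2 : 𝒴 → Yh → ℝ) (d1 d2 : ℝ) : ℝ :=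
  sInf {r : ℝ | ∃ W : 𝒳 × 𝒴 → Fin (Fintype.card 𝒳 * Fintype.card 𝒴 + 2) → ℝ,
    IsCondPmf W ∧
    (∃ π1 : Fin (Fintype.card 𝒳 * Fintype.card 𝒴 + 2) × 𝒴 → Xh,
      (∑ x, ∑ y, ∑ c, q (x, y) * W (x, y) c * δ1 x (π1 (c, y))) ≤ d1) ∧
    (∃ π2 : Fin (Fintype.card 𝒳 * Fintype.card 𝒴 + 2) × 𝒳 → Yh,
      (∑ x, ∑ y, ∑ c, q (x, y) * W (x, y) c * δ2 y (π2 (c, x))) ≤ d2) ∧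
    r = max
      (condMI (fun t : 𝒳 × 𝒴 × Fin (Fintype.card 𝒳 * Fintype.card 𝒴 + 2) =>
        q (t.1, t.2.1) * W (t.1, t.2.1) t.2.2))
      (condMI (fun t : 𝒴 × 𝒳 × Fin (Fintype.card 𝒳 * Fintype.card 𝒴 + 2) =>
        q (t.2.1, t.1) * W (t.2.1, t.1) t.2.2))}

end TWR

/-!
Achievability. Fix a test channel `W` with output `Z = (X̂, Ŷ)`. Random binning: bins of codewords
drawn from the law of `Z`, the encoder looking for a codeword jointly typical with `(x, y)` and
sending the index of its bin, and each receiver picking, in that bin, a codeword jointly typical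
with its own block. About `2 ^ (n I(XY;Z))` codewords are needed for the encoder to succeed, and a
bin may hold just under `2 ^ (n min(I(Y;Z), I(X;Z)))` of them for the receivers to be unambiguous.
Hence `2 ^ (n max(I(X;Z|Y), I(Y;Z|X)))` bins suffice, and both receivers find the encoder's pair.

Converse. Let `p` be the law of the letter triple `(X, Y, Z)` at a uniformly random time of a code
with `m` messages, and let `w(x,y,z) = p(x,z|y) / (p(x|y) p(z|y))`. For each message the output of
the receiver who sees `y` is a function of `y`, so `∏ i, w(xᵢ,yᵢ,zᵢ)` has mean at most `1` for that
output; summing over messages, it has mean at most `m` for the actual output. Jensen's inequality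
for the logarithm gives `n I(X;Z|Y) ≤ log₂ m`. The laws seen by the two receivers differ by at most
the error probabilities, and compactness of the set of joint laws provides a common limit law.
-/

namespace TWR

/-! ### Finite probability and product laws -/

section Prob

variable {α β ι : Type*} [Fintype α]

/-- The probability of the event `A` under the weights `p`. -/
def prob (p : α → ℝ) (A : α → Prop) : ℝ :=
  ∑ a with A a, p a

lemma prob_eq_sum_ite (p : α → ℝ) (A : α → Prop) :
    prob p A = ∑ a, p a * if A a then 1 else 0 := by
  simp only [prob, Finset.sum_filter, mul_ite, mul_one, mul_zero]

lemma prob_not_eq_sum_ite (p : α → ℝ) (A : α → Prop) [DecidablePred A] :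
    prob p (fun a => ¬A a) = ∑ a, if A a then 0 else p a := by
  simp only [prob, Finset.sum_filter, ite_not]

lemma prob_add_prob_not (p : α → ℝ) (A : α → Prop) :
    prob p A + prob p (fun a => ¬A a) = ∑ a, p a := by
  unfold prob
  convert Finset.sum_filter_add_sum_filter_not Finset.univ A p

lemma prob_nonneg {p : α → ℝ} (hp : ∀ a, 0 ≤ p a) (A : α → Prop) : 0 ≤ prob p A :=
  Finset.sum_nonneg fun a _ => hp a

lemma prob_mono {p : α → ℝ} (hp : ∀ a, 0 ≤ p a) {A B : α → Prop}
    (h : ∀ a, 0 < p a → A a → B a) : prob p A ≤ prob p B := by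
  simp only [prob, Finset.sum_filter]
  refine Finset.sum_le_sum fun a _ => ?_
  rcases (hp a).eq_or_lt with h0 | h0
  · simp [← h0]
  · split_ifs with hA hB
    exacts [le_rfl, absurd (h a h0 hA) hB, hp a, le_rfl]

lemma prob_exists_le [Fintype ι] {p : α → ℝ} (hp : ∀ a, 0 ≤ p a) (A : ι → α → Prop) :
    prob p (fun a => ∃ i, A i a) ≤ ∑ i, prob p (A i) := by
  simp only [prob, Finset.sum_filter]
  rw [Finset.sum_comm]
  refine Finset.sum_le_sum fun a _ => ?_
  have hnonneg : ∀ i, 0 ≤ if A i a then p a else 0 := fun i => by split_ifs; exacts [hp a, le_rfl]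
  split_ifs with h
  · obtain ⟨i, hi⟩ := h
    simpa [hi] using Finset.single_le_sum (fun i _ => hnonneg i) (Finset.mem_univ i)
  · exact Finset.sum_nonneg fun i _ => hnonneg i

lemma prob_or_le {p : α → ℝ} (hp : ∀ a, 0 ≤ p a) (A B : α → Prop) :
    prob p (fun a => A a ∨ B a) ≤ prob p A + prob p B := by
  simpa [or_comm] using prob_exists_le hp fun b : Bool => if b then A else B

lemma abs_prob_sub_prob_le {p : α → ℝ} (hp : ∀ a, 0 ≤ p a) {A B C : α → Prop}
    (h : ∀ a, ¬C a → (A a ↔ B a)) : |prob p A - prob p B| ≤ prob p C := by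
  have hle : ∀ A B : α → Prop, (∀ a, ¬C a → A a → B a) → prob p A ≤ prob p B + prob p C :=
    fun A B hAB => (prob_mono hp fun a _ hA => or_iff_not_imp_right.2 fun hC => hAB a hC hA).trans
      (prob_or_le hp B C)
  exact abs_sub_le_iff.2 ⟨sub_le_iff_le_add'.2 (hle A B fun a hC => (h a hC).1),
    sub_le_iff_le_add'.2 (hle B A fun a hC => (h a hC).2)⟩

lemma prob_comp_equiv [Fintype β] (e : α ≃ β) (p : β → ℝ) (A : β → Prop) :
    prob (fun a => p (e a)) (fun a => A (e a)) = prob p A := by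
  simp only [prob, Finset.sum_filter]
  exact e.sum_comp fun b => if A b then p b else 0

lemma prob_prod [Fintype β] (Q : α → ℝ) (K : α → β → ℝ) (A : α → β → Prop) :
    prob (fun t : α × β => Q t.1 * K t.1 t.2) (fun t => A t.1 t.2) =
      ∑ a, Q a * prob (K a) (A a) := by
  simp only [prob_eq_sum_ite, Fintype.sum_prod_type, Finset.mul_sum, mul_assoc]

lemma exists_prob_le {γ : Type} [Fintype γ] {P : γ → ℝ} (hP : IsPmf P) (Q : α → ℝ)
    (E : α → γ → Prop) {B : ℝ} (h : ∑ a, Q a * prob P (E a) ≤ B) :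
    ∃ c, prob Q (fun a => E a c) ≤ B := by
  have havg : ∑ c, P c * prob Q (fun a => E a c) ≤ B := by
    refine le_trans (le_of_eq ?_) h
    simp only [prob_eq_sum_ite, Finset.mul_sum, mul_left_comm (P _)]
    exact Finset.sum_comm
  by_contra! hlt
  obtain ⟨c, -, hc⟩ : ∃ c ∈ Finset.univ, P c ≠ 0 :=
    Finset.exists_ne_zero_of_sum_ne_zero (by simp [hP.2])
  have : ∑ c, P c * B < ∑ c, P c * prob Q (fun a => E a c) :=
    Finset.sum_lt_sum (fun c _ => mul_le_mul_of_nonneg_left (hlt c).le (hP.1 c))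
      ⟨c, Finset.mem_univ c, mul_lt_mul_of_pos_left (hlt c) ((hP.1 c).lt_of_ne' hc)⟩
  rw [← Finset.sum_mul, hP.2, one_mul] at this
  exact this.not_ge havg

end Prob

section PiLaw

variable {ι α : Type*} [Fintype ι]

/-- The law of a family of independent letters, the `i`-th one distributed as `p i`. -/
def piLaw (p : ι → α → ℝ) (s : ι → α) : ℝ :=
  ∏ i, p i (s i)

lemma piLaw_nonneg {p : ι → α → ℝ} (hp : ∀ i a, 0 ≤ p i a) (s : ι → α) : 0 ≤ piLaw p s :=
  Finset.prod_nonneg fun i _ => hp i (s i)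

lemma pos_of_piLaw_pos {p : ι → α → ℝ} (hp : ∀ i a, 0 ≤ p i a) {s : ι → α}
    (hs : 0 < piLaw p s) (i : ι) : 0 < p i (s i) :=
  (hp i (s i)).lt_of_ne' (Finset.prod_ne_zero_iff.1 hs.ne' i (Finset.mem_univ i))

variable [DecidableEq ι] [Fintype α]

lemma sum_piLaw_mul_prod (p u : ι → α → ℝ) :
    ∑ s, piLaw p s * ∏ i, u i (s i) = ∏ i, ∑ a, p i a * u i a := by
  simp only [piLaw, ← Finset.prod_mul_distrib, Fintype.prod_sum]

lemma sum_piLaw {p : ι → α → ℝ} (hp : ∀ i, ∑ a, p i a = 1) : ∑ s, piLaw p s = 1 := by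
  simp only [piLaw, ← Fintype.prod_sum, hp, Finset.prod_const_one]

lemma sum_piLaw_mul_apply {p : ι → α → ℝ} (hp : ∀ i, ∑ a, p i a = 1) (u : α → ℝ) (i : ι) :
    ∑ s, piLaw p s * u (s i) = ∑ a, p i a * u a := by
  have h := sum_piLaw_mul_prod p fun j a => if j = i then u a else 1
  rw [Finset.prod_eq_single i (fun j _ hj => by simp [hj, hp]) (by simp)] at h
  simpa using h

lemma sum_piLaw_mul_apply_mul_apply {p : ι → α → ℝ} (hp : ∀ i, ∑ a, p i a = 1) (u v : α → ℝ)
    {i j : ι} (hij : i ≠ j) :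
    ∑ s, piLaw p s * (u (s i) * v (s j)) = (∑ a, p i a * u a) * ∑ a, p j a * v a := by
  have h := sum_piLaw_mul_prod p fun l a => (if l = i then u a else 1) * if l = j then v a else 1
  rw [Finset.prod_eq_mul i j hij (fun l _ hl => by simp [hl.1, hl.2, hp]) (by simp) (by simp)] at h
  simp_rw [Finset.prod_mul_distrib] at h
  simpa [hij, hij.symm] using h

lemma isPmf_piLaw {ι α : Type} [Fintype ι] [DecidableEq ι] [Fintype α] {p : ι → α → ℝ}
    (hp : ∀ i, IsPmf (p i)) : IsPmf (piLaw p) :=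
  ⟨piLaw_nonneg fun i => (hp i).1, sum_piLaw fun i => (hp i).2⟩

end PiLaw

/-! ### Weak law of large numbers and typical sequences -/

section Typical

variable {S κ : Type} [Fintype S]

lemma sum_piLaw_mul_sq_sum {ι : Type*} [Fintype ι] [DecidableEq ι] {p : S → ℝ}
    (hp : ∑ a, p a = 1) {g : S → ℝ} (hg : ∑ a, p a * g a = 0) :
    ∑ s, piLaw (fun _ : ι => p) s * (∑ i, g (s i)) ^ 2 =
      Fintype.card ι * ∑ a, p a * g a ^ 2 := by
  have hpair : ∀ i j, ∑ s, piLaw (fun _ : ι => p) s * (g (s i) * g (s j)) =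
      if i = j then ∑ a, p a * g a ^ 2 else 0 := by
    intro i j
    split_ifs with hij
    · subst hij
      simpa only [sq] using sum_piLaw_mul_apply (fun _ => hp) (fun a => g a * g a) i
    · rw [sum_piLaw_mul_apply_mul_apply (fun _ => hp) g g hij, hg, zero_mul]
  calc ∑ s, piLaw (fun _ : ι => p) s * (∑ i, g (s i)) ^ 2
      = ∑ i, ∑ j, ∑ s, piLaw (fun _ : ι => p) s * (g (s i) * g (s j)) := by
        simp_rw [sq, Finset.sum_mul_sum, Finset.mul_sum]
        rw [Finset.sum_comm]
        exact Finset.sum_congr rfl fun i _ => Finset.sum_comm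
    _ = Fintype.card ι * ∑ a, p a * g a ^ 2 := by simp [hpair]

/-- `s` is typical when the empirical mean of each function `h k` along `s` is within `e` of its
`p`-mean; both sides are multiplied by `n`. -/
def Typical (p : S → ℝ) (h : κ → S → ℝ) (e : ℝ) {n : ℕ} (s : Fin n → S) : Prop :=
  ∀ k, |∑ i, h k (s i) - n * ∑ a, p a * h k a| ≤ n * e

lemma prob_not_abs_sum_sub_le {p : S → ℝ} (hp : IsPmf p) (h : S → ℝ) {e : ℝ} (he : 0 < e) {n : ℕ}
    (hn : 0 < n) :
    prob (piLaw fun _ : Fin n => p)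
        (fun s => ¬|∑ i, h (s i) - n * ∑ a, p a * h a| ≤ n * e) ≤
      (∑ a, p a * (h a - ∑ b, p b * h b) ^ 2) / e ^ 2 / n := by
  set μ := ∑ a, p a * h a
  have hcenter : ∑ a, p a * (h a - μ) = 0 := by
    simp only [mul_sub, Finset.sum_sub_distrib, ← Finset.sum_mul, hp.2, one_mul, μ, sub_self]
  have hvar := sum_piLaw_mul_sq_sum (ι := Fin n) hp.2 hcenter
  have : (0 : ℝ) < n := by exact_mod_cast hn
  calc prob (piLaw fun _ : Fin n => p) (fun s => ¬|∑ i, h (s i) - n * μ| ≤ n * e)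
      ≤ ∑ s, piLaw (fun _ : Fin n => p) s * ((∑ i, (h (s i) - μ)) ^ 2 / (n * e) ^ 2) := by
        rw [prob_eq_sum_ite]
        refine Finset.sum_le_sum fun s _ =>
          mul_le_mul_of_nonneg_left ?_ (piLaw_nonneg (fun _ => hp.1) s)
        split_ifs with hs
        · positivity
        · rw [one_le_div (by positivity), Finset.sum_sub_distrib, ← sq_abs (_ - _)]
          simpa using pow_le_pow_left₀ (by positivity) (not_le.1 hs).le 2
    _ = (∑ a, p a * (h a - μ) ^ 2) / e ^ 2 / n := by
        simp_rw [← mul_div_assoc, ← Finset.sum_div, hvar, Fintype.card_fin]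
        field_simp

lemma eventually_prob_not_typical_le [Finite κ] {p : S → ℝ} (hp : IsPmf p) (h : κ → S → ℝ)
    {e η : ℝ} (he : 0 < e) (hη : 0 < η) :
    ∀ᶠ n : ℕ in Filter.atTop, prob (piLaw fun _ : Fin n => p) (fun s => ¬Typical p h e s) ≤ η := by
  cases nonempty_fintype κ
  let v (k : κ) := (∑ a, p a * (h k a - ∑ b, p b * h k b) ^ 2) / e ^ 2
  have hV : Filter.Tendsto (fun n : ℕ => (∑ k, v k) / n) Filter.atTop (nhds 0) :=
    tendsto_const_div_atTop_nhds_zero_nat _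
  filter_upwards [hV.eventually_le_const hη, Filter.eventually_gt_atTop 0] with n hVn hn
  refine le_trans ?_ hVn
  simp only [Typical, not_forall, Finset.sum_div]
  exact (prob_exists_le (piLaw_nonneg fun _ => hp.1) _).trans
    (Finset.sum_le_sum fun k _ => prob_not_abs_sum_sub_le hp (h k) he hn)

lemma prod_eq_two_rpow_sum_logb {ι : Type*} [Fintype ι] {r : ι → ℝ} (hr : ∀ i, 0 < r i) :
    ∏ i, r i = (2 : ℝ) ^ ∑ i, Real.logb 2 (r i) := by
  rw [Real.rpow_sum_of_pos two_pos]
  exact Finset.prod_congr rfl fun i _ => (Real.rpow_logb two_pos (by norm_num) (hr i)).symm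

lemma Typical.prod_le {p : S → ℝ} {h : κ → S → ℝ} {e : ℝ} {n : ℕ} {s : Fin n → S}
    (hs : Typical p h e s) {k : κ} {r : S → ℝ} (hr : ∀ i, 0 < r (s i))
    (hk : h k = fun a => Real.logb 2 (r a)) :
    ∏ i, r (s i) ≤ (2 : ℝ) ^ (n * (∑ a, p a * h k a + e)) := by
  rw [prod_eq_two_rpow_sum_logb hr, Real.rpow_le_rpow_left_iff one_lt_two]
  have := (abs_le.1 (hs k)).2
  simp only [hk] at this ⊢
  linarith

lemma Typical.le_prod {p : S → ℝ} {h : κ → S → ℝ} {e : ℝ} {n : ℕ} {s : Fin n → S}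
    (hs : Typical p h e s) {k : κ} {r : S → ℝ} (hr : ∀ i, 0 < r (s i))
    (hk : h k = fun a => Real.logb 2 (r a)) :
    (2 : ℝ) ^ (n * (∑ a, p a * h k a - e)) ≤ ∏ i, r (s i) := by
  rw [prod_eq_two_rpow_sum_logb hr, Real.rpow_le_rpow_left_iff one_lt_two]
  have := (abs_le.1 (hs k)).1
  simp only [hk] at this ⊢
  linarith

end Typical

/-! ### Conditional mutual information -/

section Info

lemma sum_mul_logb_nonpos {ι : Type*} [Fintype ι] {p r : ι → ℝ} (hp : ∀ i, 0 ≤ p i)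
    (hr : ∀ i, 0 < p i → 0 < r i) (h : ∑ i, p i * r i ≤ ∑ i, p i) :
    ∑ i, p i * Real.logb 2 (r i) ≤ 0 := by
  have hterm : ∀ i, p i * Real.logb 2 (r i) ≤ (p i * r i - p i) / Real.log 2 := by
    intro i
    rcases (hp i).eq_or_lt with h0 | h0
    · simp [← h0]
    · rw [Real.logb, ← mul_div_assoc, div_le_div_iff_of_pos_right (Real.log_pos one_lt_two)]
      have := mul_le_mul_of_nonneg_left (Real.log_le_sub_one_of_pos (hr i h0)) h0.le
      linarith
  refine (Finset.sum_le_sum fun i _ => hterm i).trans ?_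
  rw [← Finset.sum_div, Finset.sum_sub_distrib]
  exact div_nonpos_of_nonpos_of_nonneg (sub_nonpos.2 h) (Real.log_nonneg one_le_two)

variable {α β γ : Type} {p : α × β × γ → ℝ}

lemma sum_fst_pos [Fintype α] (hp : ∀ t, 0 ≤ p t) {t : α × β × γ} (ht : 0 < p t) :
    0 < ∑ a, p (a, t.2.1, t.2.2) :=
  Finset.sum_pos' (fun _ _ => hp _) ⟨t.1, Finset.mem_univ _, ht⟩

lemma sum_thd_pos [Fintype γ] (hp : ∀ t, 0 ≤ p t) {t : α × β × γ} (ht : 0 < p t) :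
    0 < ∑ c, p (t.1, t.2.1, c) :=
  Finset.sum_pos' (fun _ _ => hp _) ⟨t.2.2, Finset.mem_univ _, ht⟩

variable [Fintype α] [Fintype γ]

lemma sum_fst_thd_pos (hp : ∀ t, 0 ≤ p t) {t : α × β × γ} (ht : 0 < p t) :
    0 < ∑ a, ∑ c, p (a, t.2.1, c) :=
  Finset.sum_pos' (fun _ _ => Finset.sum_nonneg fun _ _ => hp _)
    ⟨t.1, Finset.mem_univ _, sum_thd_pos hp ht⟩

/-- The conditional information density `p(a,c|b) / (p(a|b) p(c|b))`: the conditional mutual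
information `I(A;C|B)` is the mean of its logarithm. -/
def condDensity (p : α × β × γ → ℝ) (t : α × β × γ) : ℝ :=
  p t * (∑ a, ∑ c, p (a, t.2.1, c)) /
    ((∑ c, p (t.1, t.2.1, c)) * ∑ a, p (a, t.2.1, t.2.2))

lemma condDensity_nonneg (hp : ∀ t, 0 ≤ p t) (t : α × β × γ) : 0 ≤ condDensity p t :=
  div_nonneg
    (mul_nonneg (hp t) (Finset.sum_nonneg fun _ _ => Finset.sum_nonneg fun _ _ => hp _))
    (mul_nonneg (Finset.sum_nonneg fun _ _ => hp _) (Finset.sum_nonneg fun _ _ => hp _))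

lemma condDensity_pos (hp : ∀ t, 0 ≤ p t) {t : α × β × γ} (ht : 0 < p t) :
    0 < condDensity p t :=
  div_pos (mul_pos ht (sum_fst_thd_pos hp ht)) (mul_pos (sum_thd_pos hp ht) (sum_fst_pos hp ht))

lemma sum_mul_condDensity_le (hp : ∀ t, 0 ≤ p t) (b : β) (c : γ) :
    ∑ a, (∑ c', p (a, b, c')) * condDensity p (a, b, c) ≤ ∑ a, ∑ c', p (a, b, c') := by
  set pB := ∑ a, ∑ c', p (a, b, c')
  have hpB : 0 ≤ pB := Finset.sum_nonneg fun _ _ => Finset.sum_nonneg fun _ _ => hp _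
  have hterm : ∀ a, (∑ c', p (a, b, c')) * condDensity p (a, b, c) ≤
      pB * (p (a, b, c) / ∑ a', p (a', b, c)) := by
    intro a
    rcases (hp (a, b, c)).eq_or_lt with h0 | h0
    · simp [condDensity, ← h0]
    · have hAB := (sum_thd_pos hp h0).ne'
      refine le_of_eq ?_
      rw [condDensity]
      field_simp
      rfl
  refine (Finset.sum_le_sum fun a _ => hterm a).trans ?_
  rw [← Finset.mul_sum, ← Finset.sum_div]
  exact mul_le_of_le_one_right hpB (div_self_le_one _)

variable [Fintype β]

lemma condMI_eq_sum_mul_logb (p : α × β × γ → ℝ) :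
    condMI p = ∑ t, p t * (Real.logb 2 (p t) + Real.logb 2 (∑ a, ∑ c, p (a, t.2.1, c))
      - Real.logb 2 (∑ c, p (t.1, t.2.1, c)) - Real.logb 2 (∑ a, p (a, t.2.1, t.2.2))) := by
  have hBC : ∑ a, ∑ b, ∑ c, p (a, b, c) * Real.logb 2 (∑ a, p (a, b, c)) =
      ∑ b, ∑ c, ∑ a, p (a, b, c) * Real.logb 2 (∑ a, p (a, b, c)) := by
    rw [Finset.sum_comm]
    exact Finset.sum_congr rfl fun b _ => Finset.sum_comm
  have hB : ∑ a, ∑ b, ∑ c, p (a, b, c) * Real.logb 2 (∑ a, ∑ c, p (a, b, c)) =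
      ∑ b, ∑ a, ∑ c, p (a, b, c) * Real.logb 2 (∑ a, ∑ c, p (a, b, c)) :=
    Finset.sum_comm
  simp only [condMI, H2, mul_sub, mul_add, Finset.sum_sub_distrib, Finset.sum_add_distrib,
    Fintype.sum_prod_type, Finset.sum_mul, hBC, hB]
  ring

lemma condMI_eq_sum_mul_logb_condDensity (hp : ∀ t, 0 ≤ p t) :
    condMI p = ∑ t, p t * Real.logb 2 (condDensity p t) := by
  rw [condMI_eq_sum_mul_logb]
  refine Finset.sum_congr rfl fun t _ => ?_
  rcases (hp t).eq_or_lt with h0 | h0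
  · simp [← h0]
  · have hAB := (sum_thd_pos hp h0).ne'
    have hBC := (sum_fst_pos hp h0).ne'
    have hB := (sum_fst_thd_pos hp h0).ne'
    rw [condDensity, Real.logb_div (mul_ne_zero h0.ne' hB) (mul_ne_zero hAB hBC),
      Real.logb_mul h0.ne' hB, Real.logb_mul hAB hBC]
    ring

lemma sum_mul_inv_condDensity_le (hp : ∀ t, 0 ≤ p t) :
    ∑ t, p t * (condDensity p t)⁻¹ ≤ ∑ t, p t := by
  have hterm : ∀ a b c, p (a, b, c) * (condDensity p (a, b, c))⁻¹ ≤
      (∑ c', p (a, b, c')) * (∑ a', p (a', b, c)) / ∑ a', ∑ c', p (a', b, c') := by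
    intro a b c
    rcases (hp (a, b, c)).eq_or_lt with h0 | h0
    · rw [← h0, zero_mul]
      exact div_nonneg
        (mul_nonneg (Finset.sum_nonneg fun _ _ => hp _) (Finset.sum_nonneg fun _ _ => hp _))
        (Finset.sum_nonneg fun _ _ => Finset.sum_nonneg fun _ _ => hp _)
    · refine le_of_eq ?_
      rw [condDensity, inv_div, ← mul_div_assoc, mul_div_mul_left _ _ h0.ne']
  calc ∑ t, p t * (condDensity p t)⁻¹
      ≤ ∑ a, ∑ b, ∑ c, (∑ c', p (a, b, c')) * (∑ a', p (a', b, c)) /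
          ∑ a', ∑ c', p (a', b, c') := by
        simp only [Fintype.sum_prod_type]
        gcongr with a _ b _ c _
        exact hterm a b c
    _ = ∑ b, (∑ a, ∑ c, p (a, b, c)) * (∑ a, ∑ c, p (a, b, c)) / ∑ a, ∑ c, p (a, b, c) := by
        rw [Finset.sum_comm]
        refine Finset.sum_congr rfl fun b _ => ?_
        simp only [← Finset.sum_div, ← Finset.mul_sum, ← Finset.sum_mul]
        rw [Finset.sum_comm (s := (Finset.univ : Finset γ))]
    _ = ∑ t, p t := by
        simp only [mul_self_div_self, Fintype.sum_prod_type]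
        exact Finset.sum_comm

lemma condMI_nonneg (hp : ∀ t, 0 ≤ p t) : 0 ≤ condMI p := by
  have h := sum_mul_logb_nonpos hp (fun t ht => inv_pos.2 (condDensity_pos hp ht))
    (sum_mul_inv_condDensity_le hp)
  simp only [Real.logb_inv, mul_neg, Finset.sum_neg_distrib] at h
  rw [condMI_eq_sum_mul_logb_condDensity hp]
  exact neg_nonpos.1 h

lemma continuous_H2 : Continuous (H2 : (α → ℝ) → ℝ) := by
  simp only [funext fun p : α → ℝ => H2.eq_1 p, Real.logb, ← mul_div_assoc]
  exact (continuous_finsetSum _ fun a _ =>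
    (Real.continuous_mul_log.comp (continuous_apply a)).div_const _).neg

lemma continuous_condMI : Continuous (condMI : (α × β × γ → ℝ) → ℝ) := by
  simp only [funext fun p : α × β × γ → ℝ => condMI.eq_1 p]
  have hAB : Continuous fun p : α × β × γ → ℝ => H2 fun ab : α × β => ∑ c, p (ab.1, ab.2, c) :=
    continuous_H2.comp (by fun_prop)
  have hBC : Continuous fun p : α × β × γ → ℝ => H2 fun bc : β × γ => ∑ a, p (a, bc.1, bc.2) :=
    continuous_H2.comp (by fun_prop)
  have hB : Continuous fun p : α × β × γ → ℝ => H2 fun b : β => ∑ a, ∑ c, p (a, b, c) :=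
    continuous_H2.comp (by fun_prop)
  exact ((hAB.add hBC).sub continuous_H2).sub hB

end Info

/-! ### One-shot random binning -/

section Binning

variable {U S Z J L : Type*}

/-- The encoder of a binned codebook: `C (j, k)` is the `k`-th codeword of bin `j`, and the encoder
sends the index of a bin holding a codeword compatible with the source `u` (an arbitrary index if
there is none). -/
def binEncoder [Nonempty J] (A : U → Z → Prop) (C : J × L → Z) (u : U) : J :=
  Classical.epsilon fun j => ∃ k, A u (C (j, k))

/-- The decoder of a binned codebook: it picks, in the received bin, a codeword compatible with
its side information (an arbitrary word if there is none). -/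
def binDecoder [Nonempty Z] (T : S → Z → Prop) (C : J × L → Z) (js : J × S) : Z :=
  Classical.epsilon fun z => T js.2 z ∧ ∃ k, C (js.1, k) = z

/-- Some bin of the codebook holds, in two distinct positions, a codeword satisfying `A` and a
codeword satisfying `T`. -/
def BinCollision (A T : Z → Prop) (C : J × L → Z) : Prop :=
  ∃ j k k', k ≠ k' ∧ A (C (j, k)) ∧ T (C (j, k'))

lemma binDecoder_eq_of_not_binCollision [Nonempty Z] {A : Z → Prop} {T : S → Z → Prop}
    {C : J × L → Z} {j : J} {k : L} {s : S} (hA : A (C (j, k))) (hT : T s (C (j, k)))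
    (h : ¬BinCollision A (T s) C) : binDecoder T C (j, s) = C (j, k) := by
  obtain ⟨hTz, k', hk'⟩ : T s (binDecoder T C (j, s)) ∧ ∃ k', C (j, k') = binDecoder T C (j, s) :=
    Classical.epsilon_spec (p := fun z => T s z ∧ ∃ k, C (j, k) = z) ⟨_, hT, k, rfl⟩
  rw [← hk'] at hTz ⊢
  by_contra hne
  exact h ⟨j, k, k', fun hkk => hne (by rw [hkk]), hA, hTz⟩

lemma binDecoder_eq_binDecoder_of_covered {X Y : Type*} [Nonempty J] [Nonempty Z]
    {A : X × Y → Z → Prop} {T1 : Y → Z → Prop} {T2 : X → Z → Prop}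
    (hA1 : ∀ u z, A u z → T1 u.2 z) (hA2 : ∀ u z, A u z → T2 u.1 z) {C : J × L → Z} {u : X × Y}
    (hcover : ∃ i, A u (C i)) (h1 : ¬BinCollision (A u) (T1 u.2) C)
    (h2 : ¬BinCollision (A u) (T2 u.1) C) :
    A u (binDecoder T1 C (binEncoder A C u, u.2)) ∧
      binDecoder T2 C (binEncoder A C u, u.1) = binDecoder T1 C (binEncoder A C u, u.2) := by
  obtain ⟨⟨j, k⟩, hjk⟩ := hcover
  obtain ⟨k', hk'⟩ : ∃ k', A u (C (binEncoder A C u, k')) :=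
    Classical.epsilon_spec (p := fun j => ∃ k, A u (C (j, k))) ⟨j, k, hjk⟩
  rw [binDecoder_eq_of_not_binCollision hk' (hA1 u _ hk') h1,
    binDecoder_eq_of_not_binCollision hk' (hA2 u _ hk') h2]
  exact ⟨hk', rfl⟩

end Binning

lemma exp_neg_mul_le {x t : ℝ} (hx0 : 0 ≤ x) (hx1 : x ≤ 1) :
    Real.exp (-(t * x)) ≤ 1 - x + Real.exp (-t) := by
  have h := convexOn_exp.2 (Set.mem_univ 0) (Set.mem_univ (-t)) (sub_nonneg.2 hx1) hx0 (by ring)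
  simp only [smul_eq_mul, mul_zero, zero_add, Real.exp_zero, mul_one] at h
  calc Real.exp (-(t * x)) = Real.exp (x * -t) := by ring_nf
    _ ≤ 1 - x + x * Real.exp (-t) := h
    _ ≤ 1 - x + Real.exp (-t) := by
      gcongr
      exact mul_le_of_le_one_left (Real.exp_pos _).le hx1

section RandomCodebook

variable {Z ι J L : Type} [Fintype Z] [Fintype ι] [DecidableEq ι] [Fintype J] [Fintype L]

lemma prob_piLaw_forall (P : Z → ℝ) (A : Z → Prop) :
    prob (piLaw fun _ : ι => P) (fun C => ∀ i, A (C i)) = prob P A ^ Fintype.card ι := by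
  have h := sum_piLaw_mul_prod (fun _ : ι => P) fun _ z => if A z then 1 else 0
  simp only [Finset.prod_const, Finset.card_univ, Finset.prod_ite_zero,
    Finset.mem_univ, true_imp_iff, one_pow] at h
  rw [prob_eq_sum_ite, prob_eq_sum_ite]
  convert h

/-- Random covering. The codewords are drawn from `P`, but the bound is in terms of a law `K` which
`P` dominates on `A` up to the factor `a`. -/
lemma prob_piLaw_forall_not_le {P K : Z → ℝ} (hP : IsPmf P) (hK : IsPmf K) {A : Z → Prop} {a : ℝ}
    (h : ∀ z, A z → a * K z ≤ P z) :
    prob (piLaw fun _ : ι => P) (fun C => ∀ i, ¬A (C i)) ≤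
      prob K (fun z => ¬A z) + Real.exp (-(a * Fintype.card ι)) := by
  have hPsum := prob_add_prob_not P A
  have hKsum := prob_add_prob_not K A
  rw [hP.2] at hPsum
  rw [hK.2] at hKsum
  have hPK : a * prob K A ≤ prob P A := by
    rw [prob, Finset.mul_sum]
    exact Finset.sum_le_sum fun z hz => h z (Finset.mem_filter.1 hz).2
  have hmiss : prob P (fun z => ¬A z) ≤ Real.exp (-(a * prob K A)) := by
    linarith [Real.add_one_le_exp (-(a * prob K A))]
  calc prob (piLaw fun _ : ι => P) (fun C => ∀ i, ¬A (C i))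
      = prob P (fun z => ¬A z) ^ Fintype.card ι :=
        prob_piLaw_forall P fun z => ¬A z
    _ ≤ Real.exp (-(a * prob K A)) ^ Fintype.card ι :=
        pow_le_pow_left₀ (prob_nonneg hP.1 _) hmiss _
    _ = Real.exp (-(a * Fintype.card ι * prob K A)) := by
        rw [← Real.exp_nat_mul]; ring_nf
    _ ≤ 1 - prob K A + Real.exp (-(a * Fintype.card ι)) :=
        exp_neg_mul_le (prob_nonneg hK.1 A) (by linarith [prob_nonneg hK.1 fun z => ¬A z])
    _ = prob K (fun z => ¬A z) + Real.exp (-(a * Fintype.card ι)) := by linarith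

lemma prob_piLaw_and {P : Z → ℝ} (hP : IsPmf P) (A T : Z → Prop) {i j : ι} (hij : i ≠ j) :
    prob (piLaw fun _ : ι => P) (fun C => A (C i) ∧ T (C j)) = prob P A * prob P T := by
  have h := sum_piLaw_mul_apply_mul_apply (fun _ : ι => hP.2)
    (fun z => if A z then 1 else 0) (fun z => if T z then 1 else 0) hij
  simpa only [prob_eq_sum_ite, and_comm (a := A _), ite_and, mul_ite, ite_mul, mul_one,
    mul_zero, zero_mul, one_mul] using h

lemma prob_piLaw_binCollision_le [DecidableEq J] [DecidableEq L] {P : Z → ℝ} (hP : IsPmf P)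
    {A T : Z → Prop} {b c : ℝ} (hA : prob P A ≤ b) (hT : prob P T ≤ c) :
    prob (piLaw fun _ : J × L => P) (BinCollision A T) ≤
      Fintype.card J * (Fintype.card L * (Fintype.card L - 1)) * (b * c) := by
  let Pairs := (Finset.univ : Finset L).offDiag
  have hnonneg := piLaw_nonneg fun _ : J × L => hP.1
  calc prob (piLaw fun _ : J × L => P) (BinCollision A T)
      ≤ prob (piLaw fun _ : J × L => P) (fun C =>
          ∃ t : J × Pairs, A (C (t.1, t.2.1.1)) ∧ T (C (t.1, t.2.1.2))) :=
        prob_mono hnonneg fun C _ ⟨j, k, k', hkk, hA, hT⟩ =>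
          ⟨(j, ⟨(k, k'), by simpa [Pairs] using hkk⟩), hA, hT⟩
    _ ≤ ∑ _t : J × Pairs, b * c := by
        refine (prob_exists_le hnonneg _).trans (Finset.sum_le_sum fun t _ => ?_)
        rw [prob_piLaw_and hP A T fun h =>
          (Finset.mem_offDiag.1 t.2.2).2.2 (congrArg Prod.snd h)]
        exact mul_le_mul hA hT (prob_nonneg hP.1 T) ((prob_nonneg hP.1 A).trans hA)
    _ = Fintype.card J * (Fintype.card L * (Fintype.card L - 1)) * (b * c) := by
        rw [Finset.sum_const, Finset.card_univ, Fintype.card_prod, Fintype.card_coe,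
          Finset.offDiag_card, Finset.card_univ, nsmul_eq_mul, Nat.cast_mul,
          Nat.cast_sub (Nat.le_mul_self _)]
        push_cast
        ring

end RandomCodebook

/-- One-shot coding with two decoders. `A` is the compatibility relation used by the encoder, `T1`
and `T2` are what the decoders can check from their side information. -/
theorem exists_binning_code {X Y Z J L : Type} [Fintype X] [Fintype Y] [Fintype Z] [Nonempty Z]
    [Fintype J] [Nonempty J] [Fintype L] {Q : X × Y → ℝ} (hQ : IsPmf Q) {K : X × Y → Z → ℝ}
    (hK : IsCondPmf K) {P : Z → ℝ} (hP : IsPmf P) {A : X × Y → Z → Prop} {T1 : Y → Z → Prop}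
    {T2 : X → Z → Prop} (hA1 : ∀ u z, A u z → T1 u.2 z) (hA2 : ∀ u z, A u z → T2 u.1 z)
    {a b c : ℝ} (hAK : ∀ u z, A u z → a * K u z ≤ P z) (hA : ∀ u, prob P (A u) ≤ b)
    (hT1 : ∀ y, prob P (T1 y) ≤ c) (hT2 : ∀ x, prob P (T2 x) ≤ c) :
    ∃ (f : X × Y → J) (dec1 : J × Y → Z) (dec2 : J × X → Z),
      prob Q (fun u => ¬(A u (dec1 (f u, u.2)) ∧ dec2 (f u, u.1) = dec1 (f u, u.2))) ≤
        prob (fun t : (X × Y) × Z => Q t.1 * K t.1 t.2) (fun t => ¬A t.1 t.2) +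
          Real.exp (-(a * (Fintype.card J * Fintype.card L))) +
          2 * (Fintype.card J * (Fintype.card L * (Fintype.card L - 1)) * (b * c)) := by
  let E (u : X × Y) (C : J × L → Z) : Prop := (∀ i, ¬A u (C i)) ∨
    BinCollision (A u) (T1 u.2) C ∨ BinCollision (A u) (T2 u.1) C
  let PC : (J × L → Z) → ℝ := piLaw fun _ => P
  have hPC : IsPmf PC := isPmf_piLaw fun _ => hP
  set N : ℝ := Fintype.card J * (Fintype.card L * (Fintype.card L - 1))
  have hE : ∀ u, prob PC (E u) ≤ prob (K u) (fun z => ¬A u z) +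
      (Real.exp (-(a * (Fintype.card J * Fintype.card L))) + 2 * (N * (b * c))) := by
    intro u
    have hcover := prob_piLaw_forall_not_le (ι := J × L) hP (hK u) (hAK u)
    rw [Fintype.card_prod, Nat.cast_mul] at hcover
    linarith [prob_or_le hPC.1 (fun C => ∀ i, ¬A u (C i)) fun C =>
        BinCollision (A u) (T1 u.2) C ∨ BinCollision (A u) (T2 u.1) C,
      prob_or_le hPC.1 (BinCollision (A u) (T1 u.2)) (BinCollision (A u) (T2 u.1)),
      prob_piLaw_binCollision_le (J := J) (L := L) hP (hA u) (hT1 u.2),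
      prob_piLaw_binCollision_le (J := J) (L := L) hP (hA u) (hT2 u.1)]
  obtain ⟨C, hC⟩ := exists_prob_le hPC Q E
    (Finset.sum_le_sum fun u _ => mul_le_mul_of_nonneg_left (hE u) (hQ.1 u))
  refine ⟨binEncoder A C, binDecoder T1 C, binDecoder T2 C,
    (prob_mono hQ.1 fun u _ hu => ?_).trans (hC.trans_eq ?_)⟩
  · by_contra! h
    simp only [E, not_or, not_forall, not_not] at h
    exact hu (binDecoder_eq_binDecoder_of_covered hA1 hA2 h.1 h.2.1 h.2.2)
  · rw [prob_prod Q K fun u z => ¬A u z]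
    simp only [mul_add, Finset.sum_add_distrib, ← Finset.sum_mul, hQ.2, one_mul, add_assoc]

/-! ### Single-letter laws of a test channel -/

section TestChannel

variable {𝒳 𝒴 𝒵 : Type}

lemma IsPmf.nonempty [Fintype 𝒳] {p : 𝒳 → ℝ} (hp : IsPmf p) : Nonempty 𝒳 := by
  by_contra h
  rw [not_nonempty_iff] at h
  simpa using hp.2

lemma sum_swap_fst_snd {M : Type*} [AddCommMonoid M] [Fintype 𝒳] [Fintype 𝒴] [Fintype 𝒵]
    (f : 𝒳 × 𝒴 × 𝒵 → M) : ∑ t : 𝒴 × 𝒳 × 𝒵, f (t.2.1, t.1, t.2.2) = ∑ t, f t := by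
  simp only [Fintype.sum_prod_type]
  exact Finset.sum_comm

lemma isPmf_swap [Fintype 𝒳] [Fintype 𝒴] {q : 𝒳 × 𝒴 → ℝ} (hq : IsPmf q) : IsPmf (swap q) :=
  ⟨fun _ => hq.1 _, ((Equiv.prodComm 𝒴 𝒳).sum_comp q).trans hq.2⟩

/-- The joint law of the source `q` and the output of the test channel `W`. -/
def joint (q : 𝒳 × 𝒴 → ℝ) (W : 𝒳 × 𝒴 → 𝒵 → ℝ) (t : 𝒳 × 𝒴 × 𝒵) : ℝ :=
  q (t.1, t.2.1) * W (t.1, t.2.1) t.2.2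

/-- The law of the output of the test channel `W`. -/
def outLaw [Fintype 𝒳] [Fintype 𝒴] (q : 𝒳 × 𝒴 → ℝ) (W : 𝒳 × 𝒴 → 𝒵 → ℝ) (z : 𝒵) : ℝ :=
  ∑ x, ∑ y, joint q W (x, y, z)

/-- The law of the output of the test channel `W` given the second source component (identically
zero if that component has probability zero). -/
def sideLaw [Fintype 𝒳] (q : 𝒳 × 𝒴 → ℝ) (W : 𝒳 × 𝒴 → 𝒵 → ℝ) (y : 𝒴) (z : 𝒵) : ℝ :=
  (∑ x, joint q W (x, y, z)) / ∑ x, q (x, y)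

variable [Fintype 𝒵] {q : 𝒳 × 𝒴 → ℝ} {W : 𝒳 × 𝒴 → 𝒵 → ℝ}

lemma sum_joint_thd (hW : IsCondPmf W) (x : 𝒳) (y : 𝒴) : ∑ z, joint q W (x, y, z) = q (x, y) := by
  simp only [joint, ← Finset.mul_sum, (hW _).2, mul_one]

lemma sum_sideLaw_le_one [Fintype 𝒳] (hW : IsCondPmf W) (y : 𝒴) :
    ∑ z, sideLaw q W y z ≤ 1 := by
  unfold sideLaw
  rw [← Finset.sum_div, Finset.sum_comm]
  simp only [sum_joint_thd hW]
  exact div_self_le_one _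

variable [Fintype 𝒳] [Fintype 𝒴]

lemma joint_nonneg (hq : IsPmf q) (hW : IsCondPmf W) (t : 𝒳 × 𝒴 × 𝒵) : 0 ≤ joint q W t :=
  mul_nonneg (hq.1 _) ((hW _).1 _)

lemma isPmf_joint (hq : IsPmf q) (hW : IsCondPmf W) : IsPmf (joint q W) := by
  refine ⟨joint_nonneg hq hW, ?_⟩
  simp only [Fintype.sum_prod_type, sum_joint_thd hW, ← hq.2]

lemma isPmf_outLaw (hq : IsPmf q) (hW : IsCondPmf W) : IsPmf (outLaw q W) := by
  refine ⟨fun z => Finset.sum_nonneg fun x _ => Finset.sum_nonneg fun y _ =>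
    joint_nonneg hq hW _, ?_⟩
  rw [← (isPmf_joint hq hW).2]
  simp only [outLaw, Fintype.sum_prod_type]
  exact Finset.sum_comm.trans (Finset.sum_congr rfl fun _ _ => Finset.sum_comm)

lemma sideLaw_nonneg (hq : IsPmf q) (hW : IsCondPmf W) (y : 𝒴) (z : 𝒵) : 0 ≤ sideLaw q W y z :=
  div_nonneg (Finset.sum_nonneg fun _ _ => joint_nonneg hq hW _)
    (Finset.sum_nonneg fun _ _ => hq.1 _)

lemma outLaw_pos (hq : IsPmf q) (hW : IsCondPmf W) {t : 𝒳 × 𝒴 × 𝒵} (ht : 0 < joint q W t) :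
    0 < outLaw q W t.2.2 :=
  Finset.sum_pos' (fun _ _ => Finset.sum_nonneg fun _ _ => joint_nonneg hq hW _)
    ⟨t.1, Finset.mem_univ _, Finset.sum_pos' (fun _ _ => joint_nonneg hq hW _)
      ⟨t.2.1, Finset.mem_univ _, ht⟩⟩

lemma sideLaw_pos (hq : IsPmf q) (hW : IsCondPmf W) {t : 𝒳 × 𝒴 × 𝒵} (ht : 0 < joint q W t) :
    0 < sideLaw q W t.2.1 t.2.2 :=
  div_pos (Finset.sum_pos' (fun _ _ => joint_nonneg hq hW _) ⟨t.1, Finset.mem_univ _, ht⟩)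
    (Finset.sum_pos' (fun _ _ => hq.1 _)
      ⟨t.1, Finset.mem_univ _, pos_of_mul_pos_left ht ((hW _).1 _)⟩)

lemma condMI_joint_eq_sub (hq : IsPmf q) (hW : IsCondPmf W) :
    condMI (joint q W) =
      ∑ t, joint q W t * Real.logb 2 (W (t.1, t.2.1) t.2.2 / outLaw q W t.2.2) -
        ∑ t, joint q W t * Real.logb 2 (sideLaw q W t.2.1 t.2.2 / outLaw q W t.2.2) := by
  rw [condMI_eq_sum_mul_logb, ← Finset.sum_sub_distrib]
  refine Finset.sum_congr rfl fun t _ => ?_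
  rcases (joint_nonneg hq hW t).eq_or_lt with h | h
  · simp [← h]
  · have hqt : 0 < q (t.1, t.2.1) := pos_of_mul_pos_left h ((hW _).1 _)
    have hWt : 0 < W (t.1, t.2.1) t.2.2 := pos_of_mul_pos_right h (hq.1 _)
    have hBC := sum_fst_pos (joint_nonneg hq hW) h
    have hB := sum_fst_thd_pos (joint_nonneg hq hW) h
    simp only [sum_joint_thd hW] at hB ⊢
    have hlog : Real.logb 2 (joint q W t) =
        Real.logb 2 (q (t.1, t.2.1)) + Real.logb 2 (W (t.1, t.2.1) t.2.2) :=
      Real.logb_mul hqt.ne' hWt.ne'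
    rw [Real.logb_div hWt.ne' (outLaw_pos hq hW h).ne',
      Real.logb_div (sideLaw_pos hq hW h).ne' (outLaw_pos hq hW h).ne', sideLaw,
      Real.logb_div hBC.ne' hB.ne', hlog]
    ring

/-- The law of the output of the test channel `W` given `(X, Y)`, given `Y` and given `X`, for
`k = 0, 1, 2` respectively. -/
def outKernel (q : 𝒳 × 𝒴 → ℝ) (W : 𝒳 × 𝒴 → 𝒵 → ℝ) : Fin 3 → 𝒳 × 𝒴 × 𝒵 → ℝ :=
  ![fun t => W (t.1, t.2.1) t.2.2, fun t => sideLaw q W t.2.1 t.2.2,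
    fun t => sideLaw (swap q) (fun u => W u.swap) t.1 t.2.2]

/-- The information density between the output of the test channel and the component of the source
on which `outKernel q W k` conditions. -/
def outDensity (q : 𝒳 × 𝒴 → ℝ) (W : 𝒳 × 𝒴 → 𝒵 → ℝ) (k : Fin 3) (t : 𝒳 × 𝒴 × 𝒵) : ℝ :=
  Real.logb 2 (outKernel q W k t / outLaw q W t.2.2)

/-- The mutual information between the output `Z` of the test channel and a component of the
source: `I(X,Y;Z)`, `I(Y;Z)` and `I(X;Z)` for `k = 0, 1, 2` respectively. -/
def outInfo (q : 𝒳 × 𝒴 → ℝ) (W : 𝒳 × 𝒴 → 𝒵 → ℝ) (k : Fin 3) : ℝ :=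
  ∑ t, joint q W t * outDensity q W k t

lemma outKernel_pos (hq : IsPmf q) (hW : IsCondPmf W) {t : 𝒳 × 𝒴 × 𝒵} (ht : 0 < joint q W t)
    (k : Fin 3) : 0 < outKernel q W k t := by
  fin_cases k
  · exact pos_of_mul_pos_right ht (hq.1 _)
  · exact sideLaw_pos hq hW ht
  · exact sideLaw_pos (t := (t.2.1, t.1, t.2.2)) (isPmf_swap hq) (fun u => hW u.swap) ht

lemma condMI_joint (hq : IsPmf q) (hW : IsCondPmf W) :
    condMI (joint q W) = outInfo q W 0 - outInfo q W 1 :=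
  condMI_joint_eq_sub hq hW

lemma condMI_joint_swap (hq : IsPmf q) (hW : IsCondPmf W) :
    condMI (joint (swap q) fun u => W u.swap) = outInfo q W 0 - outInfo q W 2 := by
  have hout : outLaw (swap q) (fun u => W u.swap) = outLaw q W := funext fun _ => Finset.sum_comm
  rw [condMI_joint_eq_sub (isPmf_swap hq) fun u => hW u.swap, hout, outInfo, outInfo,
    ← sum_swap_fst_snd, ← sum_swap_fst_snd (fun t => _ * outDensity q W 2 t)]
  rfl

end TestChannel

/-! ### Source blocks -/

section Blocks

variable {𝒳 𝒴 𝒵 : Type} [Fintype 𝒳] [Fintype 𝒴]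

lemma sum_iid_mul (q : 𝒳 × 𝒴 → ℝ) (n : ℕ) (F : (Fin n → 𝒳) × (Fin n → 𝒴) → ℝ) :
    ∑ xy, iid q n xy * F xy = ∑ s : Fin n → 𝒳 × 𝒴, piLaw (fun _ => q) s *
      F (fun i => (s i).1, fun i => (s i).2) :=
  ((Equiv.arrowProdEquivProdArrow (Fin n) (fun _ => 𝒳) fun _ => 𝒴).sum_comp
    fun xy => iid q n xy * F xy).symm

lemma isPmf_iid {q : 𝒳 × 𝒴 → ℝ} (hq : IsPmf q) (n : ℕ) : IsPmf (iid q n) := by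
  refine ⟨fun xy => Finset.prod_nonneg fun i _ => hq.1 _, ?_⟩
  simpa [sum_piLaw fun _ => hq.2] using sum_iid_mul q n fun _ => 1

/-- The sequence of letter triples of a pair of source blocks and an output block. -/
def zipBlocks {n : ℕ} (xy : (Fin n → 𝒳) × (Fin n → 𝒴)) (z : Fin n → 𝒵) (i : Fin n) :
    𝒳 × 𝒴 × 𝒵 :=
  (xy.1 i, xy.2 i, z i)

end Blocks

/-! ### Achievability -/

section BlockCode

lemma prob_le_two_rpow_neg {α : Type*} [Fintype α] {P K : α → ℝ} (hK : ∀ a, 0 ≤ K a)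
    (hK1 : ∑ a, K a ≤ 1) {T : α → Prop} {x : ℝ} (h : ∀ a, T a → (2 : ℝ) ^ x * P a ≤ K a) :
    prob P T ≤ (2 : ℝ) ^ (-x) := by
  have hx : (0 : ℝ) < 2 ^ x := Real.rpow_pos_of_pos two_pos x
  rw [Real.rpow_neg zero_le_two, ← one_div, le_div_iff₀ hx, prob_eq_sum_ite, Finset.sum_mul]
  refine (Finset.sum_le_sum fun a _ => ?_).trans hK1
  split_ifs with ha
  · linarith [h a ha]
  · simpa using hK a

lemma sum_piLaw_le_one {ι α : Type*} [Fintype ι] [DecidableEq ι] [Fintype α] {p : ι → α → ℝ}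
    (hp : ∀ i a, 0 ≤ p i a) (hp1 : ∀ i, ∑ a, p i a ≤ 1) : ∑ s, piLaw p s ≤ 1 := by
  simp only [piLaw, ← Fintype.prod_sum]
  exact Finset.prod_le_one (fun i _ => Finset.sum_nonneg fun a _ => hp i a) fun i _ => hp1 i

variable {𝒳 𝒴 𝒵 κ : Type} [Fintype 𝒳] [Fintype 𝒴] [Fintype 𝒵] {n : ℕ}

lemma prob_iid_mul_piLaw_zipBlocks (q : 𝒳 × 𝒴 → ℝ) (W : 𝒳 × 𝒴 → 𝒵 → ℝ)
    (A : (Fin n → 𝒳 × 𝒴 × 𝒵) → Prop) :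
    prob (fun t : ((Fin n → 𝒳) × (Fin n → 𝒴)) × (Fin n → 𝒵) =>
        iid q n t.1 * piLaw (fun i => W (t.1.1 i, t.1.2 i)) t.2)
      (fun t => A (zipBlocks t.1 t.2)) = prob (piLaw fun _ => joint q W) A := by
  let unzip : ((Fin n → 𝒳) × (Fin n → 𝒴)) × (Fin n → 𝒵) ≃ (Fin n → 𝒳 × 𝒴 × 𝒵) :=
    { toFun := fun t => zipBlocks t.1 t.2
      invFun := fun s => ((fun i => (s i).1, fun i => (s i).2.1), fun i => (s i).2.2)
      left_inv := fun _ => rfl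
      right_inv := fun _ => rfl }
  simp only [iid, piLaw, ← Finset.prod_mul_distrib]
  exact prob_comp_equiv unzip (piLaw fun _ => joint q W) A

/-- The sequences of letter triples on which the information densities of the output of the test
channel and the costs `c` all have empirical means within `e` of their expectations. Letters of
probability zero are excluded, since `outDensity` is not meaningful there. -/
def JointlyTypical (q : 𝒳 × 𝒴 → ℝ) (W : 𝒳 × 𝒴 → 𝒵 → ℝ) (c : κ → 𝒳 × 𝒴 × 𝒵 → ℝ) (e : ℝ)
    (s : Fin n → 𝒳 × 𝒴 × 𝒵) : Prop :=
  (∀ i, 0 < joint q W (s i)) ∧ Typical (joint q W) (outDensity q W) e s ∧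
    Typical (joint q W) c e s

variable {q : 𝒳 × 𝒴 → ℝ} {W : 𝒳 × 𝒴 → 𝒵 → ℝ} {c : κ → 𝒳 × 𝒴 × 𝒵 → ℝ} {e : ℝ}
  {s : Fin n → 𝒳 × 𝒴 × 𝒵}

lemma JointlyTypical.prod_outKernel_le (hq : IsPmf q) (hW : IsCondPmf W)
    (hs : JointlyTypical q W c e s) (k : Fin 3) :
    ∏ i, outKernel q W k (s i) ≤
      (2 : ℝ) ^ (n * (outInfo q W k + e)) * ∏ i, outLaw q W (s i).2.2 := by
  have hout : ∀ i, 0 < outLaw q W (s i).2.2 := fun i => outLaw_pos hq hW (hs.1 i)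
  have h := hs.2.1.prod_le (k := k) (fun i => div_pos (outKernel_pos hq hW (hs.1 i) k) (hout i)) rfl
  rwa [Finset.prod_div_distrib, div_le_iff₀ (Finset.prod_pos fun i _ => hout i)] at h

lemma JointlyTypical.le_prod_outKernel (hq : IsPmf q) (hW : IsCondPmf W)
    (hs : JointlyTypical q W c e s) (k : Fin 3) :
    (2 : ℝ) ^ (n * (outInfo q W k - e)) * ∏ i, outLaw q W (s i).2.2 ≤
      ∏ i, outKernel q W k (s i) := by
  have hout : ∀ i, 0 < outLaw q W (s i).2.2 := fun i => outLaw_pos hq hW (hs.1 i)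
  have h := hs.2.1.le_prod (k := k) (fun i => div_pos (outKernel_pos hq hW (hs.1 i) k) (hout i)) rfl
  rwa [Finset.prod_div_distrib, le_div_iff₀ (Finset.prod_pos fun i _ => hout i)] at h

lemma eventually_prob_not_jointlyTypical_le [Finite κ] (hq : IsPmf q) (hW : IsCondPmf W)
    (c : κ → 𝒳 × 𝒴 × 𝒵 → ℝ) {e η : ℝ} (he : 0 < e) (hη : 0 < η) :
    ∀ᶠ n : ℕ in Filter.atTop, prob (piLaw fun _ : Fin n => joint q W)
      (fun s => ¬JointlyTypical q W c e s) ≤ η := by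
  have hJ := isPmf_joint hq hW
  filter_upwards [eventually_prob_not_typical_le hJ (outDensity q W) he (half_pos hη),
    eventually_prob_not_typical_le hJ c he (half_pos hη)] with n hinfo hcost
  have hpi := piLaw_nonneg fun _ : Fin n => hJ.1
  refine (prob_mono hpi fun s hs hnot => ?_).trans ((prob_or_le hpi _ _).trans
    ((add_le_add hinfo hcost).trans_eq (add_halves η)))
  by_contra! h
  exact hnot ⟨pos_of_piLaw_pos (fun _ => hJ.1) hs, h⟩

lemma exists_block_code (hq : IsPmf q) (hW : IsCondPmf W) (c : κ → 𝒳 × 𝒴 × 𝒵 → ℝ) (e : ℝ) {J : ℝ}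
    (hJ1 : J ≤ outInfo q W 1) (hJ2 : J ≤ outInfo q W 2) (n : ℕ) {m : ℕ} (hm : 0 < m) (L : ℕ) :
    ∃ (f : (Fin n → 𝒳) × (Fin n → 𝒴) → Fin m) (dec1 : Fin m × (Fin n → 𝒴) → Fin n → 𝒵)
      (dec2 : Fin m × (Fin n → 𝒳) → Fin n → 𝒵),
      prob (iid q n) (fun xy => ¬(JointlyTypical q W c e (zipBlocks xy (dec1 (f xy, xy.2))) ∧
          dec2 (f xy, xy.1) = dec1 (f xy, xy.2))) ≤
        prob (piLaw fun _ : Fin n => joint q W) (fun s => ¬JointlyTypical q W c e s) +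
          Real.exp (-((2 : ℝ) ^ (-(n * (outInfo q W 0 + e))) * (m * L))) +
          2 * (m * (L * (L - 1)) *
            ((2 : ℝ) ^ (-(n * (outInfo q W 0 - e))) * (2 : ℝ) ^ (-(n * (J - e))))) := by
  have hW' : IsCondPmf fun u : 𝒴 × 𝒳 => W u.swap := fun u => hW u.swap
  have : Nonempty 𝒵 := (isPmf_outLaw hq hW).nonempty
  have : Nonempty (Fin m) := ⟨⟨0, hm⟩⟩
  let P : (Fin n → 𝒵) → ℝ := piLaw fun _ => outLaw q W
  let K (xy : (Fin n → 𝒳) × (Fin n → 𝒴)) : (Fin n → 𝒵) → ℝ := piLaw fun i => W (xy.1 i, xy.2 i)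
  have hP : IsPmf P := isPmf_piLaw fun _ => isPmf_outLaw hq hW
  have hK : IsCondPmf K := fun xy => isPmf_piLaw fun _ => hW _
  have hmono : (2 : ℝ) ^ (n * (J - e)) ≤ (2 : ℝ) ^ (n * (outInfo q W 1 - e)) ∧
      (2 : ℝ) ^ (n * (J - e)) ≤ (2 : ℝ) ^ (n * (outInfo q W 2 - e)) := by
    constructor <;> gcongr <;> norm_num
  have hcode := exists_binning_code (J := Fin m) (L := Fin L) (isPmf_iid hq n) hK hP
    (A := fun xy z => JointlyTypical q W c e (zipBlocks xy z))
    (T1 := fun y z => (2 : ℝ) ^ (n * (J - e)) * P z ≤ piLaw (fun i => sideLaw q W (y i)) z)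
    (T2 := fun x z => (2 : ℝ) ^ (n * (J - e)) * P z ≤
      piLaw (fun i => sideLaw (swap q) (fun u => W u.swap) (x i)) z)
    (fun xy z hz => (mul_le_mul_of_nonneg_right hmono.1 (hP.1 z)).trans
      (hz.le_prod_outKernel hq hW 1))
    (fun xy z hz => (mul_le_mul_of_nonneg_right hmono.2 (hP.1 z)).trans
      (hz.le_prod_outKernel hq hW 2))
    (a := (2 : ℝ) ^ (-(n * (outInfo q W 0 + e)))) (b := (2 : ℝ) ^ (-(n * (outInfo q W 0 - e))))
    (c := (2 : ℝ) ^ (-(n * (J - e))))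
    (fun xy z hz => by
      rw [Real.rpow_neg zero_le_two, inv_mul_le_iff₀ (Real.rpow_pos_of_pos two_pos _)]
      exact hz.prod_outKernel_le hq hW 0)
    (fun xy => prob_le_two_rpow_neg (hK xy).1 (hK xy).2.le fun z hz =>
      hz.le_prod_outKernel hq hW 0)
    (fun y => prob_le_two_rpow_neg (piLaw_nonneg fun _ => sideLaw_nonneg hq hW _)
      (sum_piLaw_le_one (fun _ => sideLaw_nonneg hq hW _) fun _ => sum_sideLaw_le_one hW _)
      fun _ hz => hz)
    (fun x => prob_le_two_rpow_neg (piLaw_nonneg fun _ => sideLaw_nonneg (isPmf_swap hq) hW' _)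
      (sum_piLaw_le_one (fun _ => sideLaw_nonneg (isPmf_swap hq) hW' _)
        fun _ => sum_sideLaw_le_one hW' _) fun _ hz => hz)
  simpa only [Fintype.card_fin, K,
    prob_iid_mul_piLaw_zipBlocks q W fun s => ¬JointlyTypical q W c e s] using hcode

end BlockCode

section Rates

lemma ceil_mul_ceil_sub_one_le {N : ℝ} (hN : 0 < N) : (⌈N⌉₊ : ℝ) * (⌈N⌉₊ - 1) ≤ 2 * N * N := by
  rcases le_or_gt N 1 with h | h
  · have : (⌈N⌉₊ : ℝ) ≤ 1 := by exact_mod_cast Nat.ceil_le.2 (by simpa using h)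
    nlinarith [Nat.le_ceil N]
  · have := Nat.ceil_lt_add_one hN.le
    apply mul_le_mul <;> linarith [Nat.le_ceil N]

lemma ceil_two_rpow_le {x : ℝ} (hx : 0 ≤ x) : (⌈(2 : ℝ) ^ x⌉₊ : ℝ) ≤ 2 * 2 ^ x :=
  Nat.ceil_le_two_mul (by linarith [Real.one_le_rpow one_le_two hx])

lemma logb_ceil_two_rpow_div_le {n : ℕ} (hn : 0 < n) {x : ℝ} (hx : 0 ≤ x) :
    Real.logb 2 ⌈(2 : ℝ) ^ (n * x)⌉₊ / n ≤ x + 1 / n := by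
  have hn' : (0 : ℝ) < n := by exact_mod_cast hn
  have hpos : (0 : ℝ) < 2 ^ (n * x) := Real.rpow_pos_of_pos two_pos _
  have h := Real.logb_le_logb_of_le one_lt_two (hpos.trans_le (Nat.le_ceil _))
    (ceil_two_rpow_le (mul_nonneg hn'.le hx))
  rw [Real.logb_mul two_ne_zero hpos.ne', Real.logb_rpow two_pos (by norm_num),
    Real.logb_self_eq_one one_lt_two] at h
  rw [div_le_iff₀ hn', add_mul, one_div_mul_cancel hn'.ne']
  linarith

lemma two_rpow_le_two_rpow_neg_mul_ceil_mul_ceil {a b x y : ℝ} (h : a + b = x + y) :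
    (2 : ℝ) ^ y ≤ (2 : ℝ) ^ (-x) * (⌈(2 : ℝ) ^ a⌉₊ * ⌈(2 : ℝ) ^ b⌉₊) := by
  calc (2 : ℝ) ^ y = (2 : ℝ) ^ (-x) * ((2 : ℝ) ^ a * (2 : ℝ) ^ b) := by
        rw [← Real.rpow_add two_pos, ← Real.rpow_add two_pos]
        congr 1
        linarith
    _ ≤ (2 : ℝ) ^ (-x) * (⌈(2 : ℝ) ^ a⌉₊ * ⌈(2 : ℝ) ^ b⌉₊) := by
        gcongr <;> exact Nat.le_ceil _

lemma ceil_mul_ceil_mul_sub_one_mul_two_rpow_le {a b x y z : ℝ} (ha : 0 ≤ a)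
    (h : a + 2 * b + y = x + z) :
    (⌈(2 : ℝ) ^ a⌉₊ : ℝ) * (⌈(2 : ℝ) ^ b⌉₊ * (⌈(2 : ℝ) ^ b⌉₊ - 1)) *
      ((2 : ℝ) ^ (-x) * (2 : ℝ) ^ (-z)) ≤ 4 * (2 : ℝ) ^ (-y) := by
  have hN : (0 : ℝ) < 2 ^ b := Real.rpow_pos_of_pos two_pos _
  calc (⌈(2 : ℝ) ^ a⌉₊ : ℝ) * (⌈(2 : ℝ) ^ b⌉₊ * (⌈(2 : ℝ) ^ b⌉₊ - 1)) *
        ((2 : ℝ) ^ (-x) * (2 : ℝ) ^ (-z))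
      ≤ 2 * 2 ^ a * (2 * 2 ^ b * 2 ^ b) * ((2 : ℝ) ^ (-x) * (2 : ℝ) ^ (-z)) := by
        gcongr ?_ * _
        exact mul_le_mul (ceil_two_rpow_le ha) (ceil_mul_ceil_sub_one_le hN)
          (mul_nonneg (Nat.cast_nonneg _) (sub_nonneg.2 (by exact_mod_cast Nat.ceil_pos.2 hN)))
          (by positivity)
    _ = 4 * ((2 : ℝ) ^ a * (2 : ℝ) ^ b * (2 : ℝ) ^ b * (2 : ℝ) ^ (-x) * (2 : ℝ) ^ (-z)) := by ring
    _ = 4 * (2 : ℝ) ^ (-y) := by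
        simp only [← Real.rpow_add two_pos]
        congr 2
        linarith

/-- The error terms of the block code: two of random binning and one from rounding the rate. -/
lemma eventually_block_error_terms_le {e η : ℝ} (he : 0 < e) (hη : 0 < η) :
    ∀ᶠ n : ℕ in Filter.atTop, Real.exp (-(2 : ℝ) ^ (n * e)) ≤ η ∧ (2 : ℝ) ^ (-(n * e)) ≤ η ∧
      1 / (n : ℝ) ≤ e := by
  have hpow : Filter.Tendsto (fun n : ℕ => (2 : ℝ) ^ (n * e)) Filter.atTop Filter.atTop :=
    (tendsto_rpow_atTop_of_base_gt_one 2 one_lt_two).comp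
      (tendsto_natCast_atTop_atTop.atTop_mul_const he)
  have hinv : Filter.Tendsto (fun n : ℕ => (2 : ℝ) ^ (-(n * e))) Filter.atTop (nhds 0) := by
    simp only [Real.rpow_neg zero_le_two]
    exact tendsto_inv_atTop_zero.comp hpow
  exact ((Real.tendsto_exp_neg_atTop_nhds_zero.comp hpow).eventually_le_const hη).and
    ((hinv.eventually_le_const hη).and
      (tendsto_one_div_atTop_nhds_zero_nat.eventually_le_const he))

end Rates

section Achievability

variable {𝒳 𝒴 : Type} [Fintype 𝒳] [Fintype 𝒴]

theorem eventually_exists_block_code {𝒵 κ : Type} [Fintype 𝒵] [Finite κ] {q : 𝒳 × 𝒴 → ℝ}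
    (hq : IsPmf q) {W : 𝒳 × 𝒴 → 𝒵 → ℝ} (hW : IsCondPmf W) (c : κ → 𝒳 × 𝒴 × 𝒵 → ℝ) {R : ℝ}
    (hR1 : condMI (joint q W) ≤ R) (hR2 : condMI (joint (swap q) fun u => W u.swap) ≤ R)
    {e η : ℝ} (he : 0 < e) (hη : 0 < η) :
    ∀ᶠ n : ℕ in Filter.atTop, ∃ (m : ℕ) (f : (Fin n → 𝒳) × (Fin n → 𝒴) → Fin m)
      (dec1 : Fin m × (Fin n → 𝒴) → Fin n → 𝒵) (dec2 : Fin m × (Fin n → 𝒳) → Fin n → 𝒵),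
      Real.logb 2 m / n ≤ R + 8 * e ∧
      prob (iid q n) (fun xy => ¬(JointlyTypical q W c e (zipBlocks xy (dec1 (f xy, xy.2))) ∧
        dec2 (f xy, xy.1) = dec1 (f xy, xy.2))) ≤ η := by
  have hR : 0 ≤ R := (condMI_nonneg (joint_nonneg hq hW)).trans hR1
  rw [condMI_joint hq hW] at hR1
  rw [condMI_joint_swap hq hW] at hR2
  filter_upwards [eventually_prob_not_jointlyTypical_le hq hW c he (half_pos hη),
    eventually_block_error_terms_le he (η := η / 20) (by positivity),
    Filter.eventually_gt_atTop 0] with n htyp ⟨hexp, hpow, hinv⟩ hn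
  set m := ⌈(2 : ℝ) ^ (n * (R + 7 * e))⌉₊
  set L := ⌈(2 : ℝ) ^ (n * (outInfo q W 0 - R - 5 * e))⌉₊
  have hm : 0 < m := Nat.ceil_pos.2 (Real.rpow_pos_of_pos two_pos _)
  have hcover : (2 : ℝ) ^ (n * e) ≤ (2 : ℝ) ^ (-(n * (outInfo q W 0 + e))) * (m * L) :=
    two_rpow_le_two_rpow_neg_mul_ceil_mul_ceil (by ring)
  have hcollision : (m : ℝ) * (L * (L - 1)) * ((2 : ℝ) ^ (-(n * (outInfo q W 0 - e))) *
      (2 : ℝ) ^ (-(n * (outInfo q W 0 - R - e)))) ≤ 4 * (2 : ℝ) ^ (-(n * e)) :=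
    ceil_mul_ceil_mul_sub_one_mul_two_rpow_le (by positivity) (by ring)
  have hrate : Real.logb 2 m / n ≤ R + 7 * e + 1 / n :=
    logb_ceil_two_rpow_div_le hn (by positivity)
  obtain ⟨f, dec1, dec2, herr⟩ := exists_block_code hq hW c e (J := outInfo q W 0 - R)
    (by linarith) (by linarith) n hm L
  refine ⟨m, f, dec1, dec2, by linarith, ?_⟩
  have := (Real.exp_le_exp.2 (neg_le_neg hcover)).trans hexp
  linarith

lemma sum_mul_le_add_mul_prob_not {α : Type} [Fintype α] {w : α → ℝ} (hw : IsPmf w) {c : α → ℝ}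
    {D M : ℝ} (hM : ∀ a, c a ≤ D + M) {A : α → Prop} (hA : ∀ a, A a → c a ≤ D) :
    ∑ a, w a * c a ≤ D + M * prob w fun a => ¬A a := by
  have hterm : ∀ a, w a * c a ≤ w a * D + M * if A a then 0 else w a := by
    intro a
    split_ifs with ha
    · simpa using mul_le_mul_of_nonneg_left (hA a ha) (hw.1 a)
    · exact (mul_le_mul_of_nonneg_left (hM a) (hw.1 a)).trans_eq (by ring)
  refine (Finset.sum_le_sum fun a _ => hterm a).trans_eq ?_
  rw [Finset.sum_add_distrib, ← Finset.sum_mul, hw.2, one_mul, ← Finset.mul_sum,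
    prob_not_eq_sum_ite]

lemma inv_mul_sum_le {n : ℕ} (hn : 0 < n) {u : Fin n → ℝ} {B : ℝ} (h : ∑ i, u i ≤ n * B) :
    (n : ℝ)⁻¹ * ∑ i, u i ≤ B :=
  (inv_mul_le_iff₀ (by exact_mod_cast hn)).2 h

theorem exists_block_code_mean_cost_le {𝒵 κ : Type} [Fintype 𝒵] [Finite κ] {q : 𝒳 × 𝒴 → ℝ}
    (hq : IsPmf q) {W : 𝒳 × 𝒴 → 𝒵 → ℝ} (hW : IsCondPmf W) (c : κ → 𝒳 × 𝒴 × 𝒵 → ℝ) {R : ℝ}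
    (hR1 : condMI (joint q W) ≤ R) (hR2 : condMI (joint (swap q) fun u => W u.swap) ≤ R)
    {ε : ℝ} (hε : 0 < ε) :
    ∃ (n m : ℕ) (f : (Fin n → 𝒳) × (Fin n → 𝒴) → Fin m)
      (dec1 : Fin m × (Fin n → 𝒴) → Fin n → 𝒵) (dec2 : Fin m × (Fin n → 𝒳) → Fin n → 𝒵),
      0 < n ∧ Real.logb 2 m / n ≤ R + ε ∧
      (∀ k, ∑ xy, iid q n xy * ((n : ℝ)⁻¹ * ∑ i, c k (zipBlocks xy (dec1 (f xy, xy.2)) i)) ≤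
        ∑ t, joint q W t * c k t + ε) ∧
      (∀ k, ∑ xy, iid q n xy * ((n : ℝ)⁻¹ * ∑ i, c k (zipBlocks xy (dec2 (f xy, xy.1)) i)) ≤
        ∑ t, joint q W t * c k t + ε) ∧
      prob (iid q n) (fun xy => dec2 (f xy, xy.1) ≠ dec1 (f xy, xy.2)) ≤ ε := by
  set D : κ → ℝ := fun k => ∑ t, joint q W t * c k t + ε / 8
  obtain ⟨M, hM0, hM⟩ : ∃ M > 0, ∀ k t, c k t ≤ D k + M := by
    obtain ⟨M, hM⟩ := Finite.bddAbove_range fun a : κ × 𝒳 × 𝒴 × 𝒵 => c a.1 a.2 - D a.1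
    refine ⟨max M 1, by positivity, fun k t => ?_⟩
    linarith [hM ⟨(k, t), rfl⟩, le_max_left M 1]
  have hη : 0 < min ε (ε / (2 * M)) := by positivity
  obtain ⟨n, ⟨m, f, dec1, dec2, hrate, herr⟩, hn⟩ :=
    ((eventually_exists_block_code hq hW c hR1 hR2 (e := ε / 8) (by positivity) hη).and
      (Filter.eventually_gt_atTop 0)).exists
  have hiid := isPmf_iid hq n
  have herrM : M * prob (iid q n) (fun xy => ¬(JointlyTypical q W c (ε / 8)
      (zipBlocks xy (dec1 (f xy, xy.2))) ∧ dec2 (f xy, xy.1) = dec1 (f xy, xy.2))) ≤ ε / 2 :=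
    calc _ ≤ M * (ε / (2 * M)) := by gcongr; exact herr.trans (min_le_right _ _)
      _ = ε / 2 := by field_simp
  have hcost : ∀ k (g : (Fin n → 𝒳) × (Fin n → 𝒴) → Fin n → 𝒵),
      (∀ xy, dec2 (f xy, xy.1) = dec1 (f xy, xy.2) → g xy = dec1 (f xy, xy.2)) →
      ∑ xy, iid q n xy * ((n : ℝ)⁻¹ * ∑ i, c k (zipBlocks xy (g xy) i)) ≤
        ∑ t, joint q W t * c k t + ε := by
    intro k g hg
    refine (sum_mul_le_add_mul_prob_not (D := D k) hiid (fun xy => inv_mul_sum_le hn ?_)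
      fun xy h => inv_mul_sum_le hn ?_).trans ((add_le_add_right herrM _).trans (by grind))
    · exact (Finset.sum_le_sum fun i _ => hM k _).trans (by simp [mul_add])
    · rw [hg xy h.2]
      simp only [D, mul_add]
      linarith [(abs_le.1 (h.1.2.2 k)).2]
  refine ⟨n, m, f, dec1, dec2, hn, by linarith, fun k => hcost k _ fun _ _ => rfl,
    fun k => hcost k _ fun _ h => h, ?_⟩
  exact (prob_mono hiid.1 fun xy _ h h' => h h'.2).trans (herr.trans (min_le_left _ _))

variable {Xh Yh : Type} [Fintype Xh] [Fintype Yh]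

lemma sum_joint_mul {𝒵 : Type} [Fintype 𝒵] (q : 𝒳 × 𝒴 → ℝ) (W : 𝒳 × 𝒴 → 𝒵 → ℝ)
    (c : 𝒳 × 𝒴 × 𝒵 → ℝ) :
    ∑ t, joint q W t * c t = ∑ x, ∑ y, ∑ z, q (x, y) * W (x, y) z * c (x, y, z) := by
  simp only [Fintype.sum_prod_type, joint]

theorem crAchievable_of_mem_crFormulaSet {q : 𝒳 × 𝒴 → ℝ} (hq : IsPmf q) {δ1 : 𝒳 → Xh → ℝ}
    {δ2 : 𝒴 → Yh → ℝ} {d1 d2 r : ℝ} (hr : r ∈ crFormulaSet q δ1 δ2 d1 d2) :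
    CRAchievable q δ1 δ2 d1 d2 r := by
  obtain ⟨W, hW, hW1, hW2, rfl⟩ := hr
  intro ε hε
  let c : Fin 2 → 𝒳 × 𝒴 × (Xh × Yh) → ℝ := ![fun t => δ1 t.1 t.2.2.1, fun t => δ2 t.2.1 t.2.2.2]
  obtain ⟨n, m, f, dec1, dec2, hn, hrate, hcost1, hcost2, herr⟩ :=
    exists_block_code_mean_cost_le hq hW c (le_max_left _ _) (le_max_right _ _) hε
  have hc1 : ∑ t, joint q W t * c 0 t ≤ d1 := (sum_joint_mul q W (c 0)).trans_le hW1
  have hc2 : ∑ t, joint q W t * c 1 t ≤ d2 := (sum_joint_mul q W (c 1)).trans_le hW2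
  refine ⟨n, m, f, fun p i => (dec1 p i).1, fun p i => (dec2 p i).2, fun p i => (dec1 p i).2,
    fun p i => (dec2 p i).1, hn, hrate, (hcost1 0).trans (by gcongr), (hcost2 1).trans (by gcongr),
    ?_, ?_⟩
  all_goals
    refine (prob_not_eq_sum_ite _ _).ge.trans
      ((prob_mono (isPmf_iid hq n).1 fun xy _ h h' => h ?_).trans herr)
    simp only [h']

end Achievability

/-! ### Converse -/

section AverageLaw

variable {𝒳 𝒴 𝒵 : Type} [Fintype 𝒳] [Fintype 𝒴] {q : 𝒳 × 𝒴 → ℝ} {n : ℕ}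

/-- The law of the letter triple at a uniformly random time when the blocks `xy` are drawn from
`iid q n` and reconstructed as `ζ xy`. -/
def averageLaw (q : 𝒳 × 𝒴 → ℝ) (ζ : (Fin n → 𝒳) × (Fin n → 𝒴) → Fin n → 𝒵)
    (t : 𝒳 × 𝒴 × 𝒵) : ℝ :=
  (n : ℝ)⁻¹ * ∑ i, prob (iid q n) fun xy => zipBlocks xy (ζ xy) i = t

lemma averageLaw_nonneg (hq : IsPmf q) (ζ : (Fin n → 𝒳) × (Fin n → 𝒴) → Fin n → 𝒵)
    (t : 𝒳 × 𝒴 × 𝒵) : 0 ≤ averageLaw q ζ t :=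
  mul_nonneg (by positivity) (Finset.sum_nonneg fun _ _ => prob_nonneg (isPmf_iid hq n).1 _)

lemma averageLaw_pos (hq : IsPmf q) (ζ : (Fin n → 𝒳) × (Fin n → 𝒴) → Fin n → 𝒵)
    {xy : (Fin n → 𝒳) × (Fin n → 𝒴)} (hxy : 0 < iid q n xy) (i : Fin n) :
    0 < averageLaw q ζ (zipBlocks xy (ζ xy) i) := by
  have hnonneg := (isPmf_iid hq n).1
  refine mul_pos (by have := i.pos; positivity) (Finset.sum_pos'
    (fun _ _ => prob_nonneg hnonneg _) ⟨i, Finset.mem_univ _, ?_⟩)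
  exact Finset.sum_pos' (fun _ _ => hnonneg _) ⟨xy, by simp, hxy⟩

lemma sum_averageLaw_thd [Fintype 𝒵] (hq : IsPmf q) (hn : 0 < n)
    (ζ : (Fin n → 𝒳) × (Fin n → 𝒴) → Fin n → 𝒵) (x : 𝒳) (y : 𝒴) :
    ∑ z, averageLaw q ζ (x, y, z) = q (x, y) := by
  have hletter : ∀ i, ∑ z, prob (iid q n) (fun xy => zipBlocks xy (ζ xy) i = (x, y, z)) =
      q (x, y) := by
    intro i
    have hmarg : ∑ xy, iid q n xy * (if (xy.1 i, xy.2 i) = (x, y) then 1 else 0) = q (x, y) :=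
      (sum_iid_mul q n _).trans <|
        (sum_piLaw_mul_apply (fun _ => hq.2) (fun a => if a = (x, y) then 1 else 0) i).trans
          (by simp)
    simp only [prob_eq_sum_ite]
    rw [Finset.sum_comm]
    simpa [zipBlocks, Prod.ext_iff, ite_and, ← and_assoc, Finset.sum_ite_eq] using hmarg
  simp only [averageLaw, ← Finset.mul_sum]
  rw [Finset.sum_comm]
  have : (n : ℝ) ≠ 0 := by positivity
  simp [hletter, this]

lemma sum_averageLaw_mul [Fintype 𝒵] (q : 𝒳 × 𝒴 → ℝ)
    (ζ : (Fin n → 𝒳) × (Fin n → 𝒴) → Fin n → 𝒵) (u : 𝒳 × 𝒴 × 𝒵 → ℝ) :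
    ∑ t, averageLaw q ζ t * u t =
      ∑ xy, iid q n xy * ((n : ℝ)⁻¹ * ∑ i, u (zipBlocks xy (ζ xy) i)) := by
  have hletter : ∀ i, ∑ t, prob (iid q n) (fun xy => zipBlocks xy (ζ xy) i = t) * u t =
      ∑ xy, iid q n xy * u (zipBlocks xy (ζ xy) i) := by
    intro i
    simp only [prob_eq_sum_ite, Finset.sum_mul]
    rw [Finset.sum_comm]
    simp
  simp only [averageLaw, mul_assoc, Finset.sum_mul, mul_left_comm _ (n : ℝ)⁻¹, ← Finset.mul_sum]
  rw [Finset.sum_comm]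
  simp only [hletter, Finset.mul_sum]
  rw [Finset.sum_comm]

lemma averageLaw_swap (q : 𝒳 × 𝒴 → ℝ) (ζ : (Fin n → 𝒳) × (Fin n → 𝒴) → Fin n → 𝒵)
    (t : 𝒴 × 𝒳 × 𝒵) :
    averageLaw (swap q) (fun yx => ζ yx.swap) t = averageLaw q ζ (t.2.1, t.1, t.2.2) := by
  unfold averageLaw
  congr 1
  refine Finset.sum_congr rfl fun i _ => ?_
  rw [← prob_comp_equiv (Equiv.prodComm (Fin n → 𝒴) (Fin n → 𝒳))]
  congr 1
  ext yx
  simp [zipBlocks, Prod.ext_iff, and_left_comm]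

lemma abs_averageLaw_sub_averageLaw_le (hq : IsPmf q)
    (ζ ζ' : (Fin n → 𝒳) × (Fin n → 𝒴) → Fin n → 𝒵) (t : 𝒳 × 𝒴 × 𝒵) :
    |averageLaw q ζ t - averageLaw q ζ' t| ≤ prob (iid q n) fun xy => ζ xy ≠ ζ' xy := by
  have hiid := (isPmf_iid hq n).1
  have hletter : ∀ i, |prob (iid q n) (fun xy => zipBlocks xy (ζ xy) i = t) -
      prob (iid q n) fun xy => zipBlocks xy (ζ' xy) i = t| ≤
        prob (iid q n) fun xy => ζ xy ≠ ζ' xy :=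
    fun i => abs_prob_sub_prob_le hiid fun xy h => by rw [not_ne_iff.1 h]
  rcases n.eq_zero_or_pos with rfl | hn
  · simpa [averageLaw] using prob_nonneg hiid _
  · rw [averageLaw, averageLaw, ← mul_sub, ← Finset.sum_sub_distrib, abs_mul, abs_inv,
      Nat.abs_cast, inv_mul_le_iff₀ (by exact_mod_cast hn)]
    exact (Finset.abs_sum_le_sum_abs _ _).trans
      ((Finset.sum_le_sum fun i _ => hletter i).trans_eq (by simp))

end AverageLaw

section SideInformation

variable {𝒳 𝒴 𝒵 : Type} [Fintype 𝒳] [Fintype 𝒴] {q : 𝒳 × 𝒴 → ℝ} {n m : ℕ}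

lemma sum_iid_mul_prod_zipBlocks_le (hq : IsPmf q) {w : 𝒳 × 𝒴 × 𝒵 → ℝ} (hw : ∀ t, 0 ≤ w t)
    (hsum : ∀ y z, ∑ x, q (x, y) * w (x, y, z) ≤ ∑ x, q (x, y))
    (g : (Fin n → 𝒴) → Fin n → 𝒵) :
    ∑ xy, iid q n xy * ∏ i, w (zipBlocks xy (g xy.2) i) ≤ 1 := by
  have hblock : ∀ y : Fin n → 𝒴, ∑ x : Fin n → 𝒳,
      iid q n (x, y) * ∏ i, w (zipBlocks (x, y) (g y) i) ≤
        ∑ x : Fin n → 𝒳, iid q n (x, y) := by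
    intro y
    have hfactor := sum_piLaw_mul_prod (fun i x => q (x, y i)) fun i x => w (x, y i, g y i)
    have hmarg := sum_piLaw_mul_prod (fun i x => q (x, y i)) fun _ _ => 1
    simp only [Finset.prod_const_one, mul_one] at hmarg
    exact (hfactor.trans_le (Finset.prod_le_prod (fun i _ => Finset.sum_nonneg fun x _ =>
      mul_nonneg (hq.1 _) (hw _)) fun i _ => hsum _ _)).trans_eq hmarg.symm
  rw [← (isPmf_iid hq n).2, Fintype.sum_prod_type_right, Fintype.sum_prod_type_right]
  exact Finset.sum_le_sum fun y _ => hblock y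

lemma sum_iid_mul_prod_decoded_le (hq : IsPmf q) {w : 𝒳 × 𝒴 × 𝒵 → ℝ} (hw : ∀ t, 0 ≤ w t)
    (hsum : ∀ y z, ∑ x, q (x, y) * w (x, y, z) ≤ ∑ x, q (x, y))
    (f : (Fin n → 𝒳) × (Fin n → 𝒴) → Fin m) (dec : Fin m × (Fin n → 𝒴) → Fin n → 𝒵) :
    ∑ xy, iid q n xy * ∏ i, w (zipBlocks xy (dec (f xy, xy.2)) i) ≤ m := by
  calc ∑ xy, iid q n xy * ∏ i, w (zipBlocks xy (dec (f xy, xy.2)) i)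
      ≤ ∑ xy, ∑ j, iid q n xy * ∏ i, w (zipBlocks xy (dec (j, xy.2)) i) :=
        Finset.sum_le_sum fun xy _ => Finset.single_le_sum
          (f := fun j => iid q n xy * ∏ i, w (zipBlocks xy (dec (j, xy.2)) i))
          (fun j _ => mul_nonneg ((isPmf_iid hq n).1 xy) (Finset.prod_nonneg fun i _ => hw _))
          (Finset.mem_univ (f xy))
    _ = ∑ j, ∑ xy, iid q n xy * ∏ i, w (zipBlocks xy (dec (j, xy.2)) i) := Finset.sum_comm
    _ ≤ ∑ _j : Fin m, 1 := Finset.sum_le_sum fun j _ =>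
        sum_iid_mul_prod_zipBlocks_le hq hw hsum fun y => dec (j, y)
    _ = m := by simp

theorem condMI_averageLaw_le [Fintype 𝒵] (hq : IsPmf q) (hn : 0 < n)
    (f : (Fin n → 𝒳) × (Fin n → 𝒴) → Fin m) (dec : Fin m × (Fin n → 𝒴) → Fin n → 𝒵) :
    condMI (averageLaw q fun xy => dec (f xy, xy.2)) ≤ Real.logb 2 m / n := by
  set p := averageLaw q fun xy => dec (f xy, xy.2) with hp
  have hp0 : ∀ t, 0 ≤ p t := averageLaw_nonneg hq _
  have hiid := isPmf_iid hq n
  have hm : (0 : ℝ) < m := by exact_mod_cast (f hiid.nonempty.some).pos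
  have hprod : ∑ xy, iid q n xy * ∏ i, condDensity p (zipBlocks xy (dec (f xy, xy.2)) i) ≤ m := by
    refine sum_iid_mul_prod_decoded_le hq (condDensity_nonneg hp0) (fun y z => ?_) f dec
    simpa only [hp, sum_averageLaw_thd hq hn] using sum_mul_condDensity_le hp0 y z
  have hpos : ∀ xy, 0 < iid q n xy → ∀ i,
      0 < condDensity p (zipBlocks xy (dec (f xy, xy.2)) i) :=
    fun xy h i => condDensity_pos hp0 (averageLaw_pos hq _ h i)
  have hlog := sum_mul_logb_nonpos hiid.1
    (r := fun xy => (∏ i, condDensity p (zipBlocks xy (dec (f xy, xy.2)) i)) / m)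
    (fun xy h => div_pos (Finset.prod_pos fun i _ => hpos xy h i) hm)
    (by simpa only [← mul_div_assoc, ← Finset.sum_div, hiid.2, div_le_one hm] using hprod)
  have hterm : ∀ xy, iid q n xy *
      Real.logb 2 ((∏ i, condDensity p (zipBlocks xy (dec (f xy, xy.2)) i)) / m) =
      iid q n xy * ∑ i, Real.logb 2 (condDensity p (zipBlocks xy (dec (f xy, xy.2)) i)) -
        iid q n xy * Real.logb 2 m := by
    intro xy
    rcases (hiid.1 xy).eq_or_lt with h | h
    · simp [← h]
    · rw [Real.logb_div (Finset.prod_pos fun i _ => hpos xy h i).ne' hm.ne',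
        Real.logb_prod _ _ fun i _ => (hpos xy h i).ne', mul_sub]
  simp only [hterm, Finset.sum_sub_distrib, ← Finset.sum_mul, hiid.2, one_mul, sub_nonpos] at hlog
  rw [condMI_eq_sum_mul_logb_condDensity hp0]
  refine (sum_averageLaw_mul q _ fun t => Real.logb 2 (condDensity p t)).trans_le ?_
  simp only [inv_mul_eq_div, ← mul_div_assoc, ← Finset.sum_div]
  exact div_le_div_of_nonneg_right hlog (Nat.cast_nonneg n)

end SideInformation

section Limit

variable {𝒳 𝒴 𝒵 : Type} [Fintype 𝒵] {q : 𝒳 × 𝒴 → ℝ}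

/-- The nonnegative weights on `𝒳 × 𝒴 × 𝒵` whose marginal on `𝒳 × 𝒴` is `q`. -/
def extensions (𝒵 : Type) [Fintype 𝒵] (q : 𝒳 × 𝒴 → ℝ) : Set (𝒳 × 𝒴 × 𝒵 → ℝ) :=
  {p | (∀ t, 0 ≤ p t) ∧ ∀ x y, ∑ z, p (x, y, z) = q (x, y)}

lemma isCompact_extensions (q : 𝒳 × 𝒴 → ℝ) : IsCompact (extensions 𝒵 q) := by
  refine (isCompact_Icc (a := 0) (b := fun t : 𝒳 × 𝒴 × 𝒵 => q (t.1, t.2.1))).of_isClosed_subset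
    ?_ fun p hp => ⟨hp.1, fun t => ?_⟩
  · simp only [extensions, Set.ofPred_and, Set.ofPred_forall]
    exact (isClosed_iInter fun t => isClosed_le continuous_const (continuous_apply t)).inter
      (isClosed_iInter fun x => isClosed_iInter fun y => isClosed_eq (by fun_prop) continuous_const)
  · exact (Finset.single_le_sum (f := fun z => p (t.1, t.2.1, z)) (fun z _ => hp.1 _)
      (Finset.mem_univ t.2.2)).trans_eq (hp.2 _ _)

lemma exists_joint_eq [Fintype 𝒳] [Fintype 𝒴] (hq : IsPmf q) {p : 𝒳 × 𝒴 × 𝒵 → ℝ}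
    (hp : p ∈ extensions 𝒵 q) : ∃ W, IsCondPmf W ∧ joint q W = p := by
  obtain ⟨-, -, z₀⟩ : Nonempty (𝒳 × 𝒴 × 𝒵) := IsPmf.nonempty
    ⟨hp.1, by simpa only [Fintype.sum_prod_type, hp.2] using hq.2⟩
  refine ⟨fun a z => if q a = 0 then if z = z₀ then 1 else 0 else p (a.1, a.2, z) / q a,
    fun a => ?_, funext fun t => ?_⟩
  · by_cases ha : q a = 0
    · simp only [ha, if_true]
      exact ⟨fun z => by positivity, by simp⟩
    · simp only [ha, if_false]
      exact ⟨fun z => div_nonneg (hp.1 _) (hq.1 _), by rw [← Finset.sum_div, hp.2, div_self ha]⟩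
  · by_cases ha : q (t.1, t.2.1) = 0
    · have hsum := hp.2 t.1 t.2.1
      rw [ha, Finset.sum_eq_zero_iff_of_nonneg fun z _ => hp.1 _] at hsum
      simp [joint, ha, hsum]
    · simp [joint, ha, mul_div_cancel₀]

lemma exists_le_of_forall_exists_le_add {E : Type*} [TopologicalSpace E] {K : Set E}
    (hK : IsCompact K) {F : E → ℝ} (hF : Continuous F) {a : ℝ}
    (h : ∀ ε > 0, ∃ x ∈ K, F x ≤ a + ε) : ∃ x ∈ K, F x ≤ a := by
  obtain ⟨y, hy, -⟩ := h 1 one_pos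
  obtain ⟨x, hx, hmin⟩ := hK.exists_isMinOn ⟨y, hy⟩ hF.continuousOn
  refine ⟨x, hx, le_of_forall_pos_le_add fun ε hε => ?_⟩
  obtain ⟨y, hy, hle⟩ := h ε hε
  exact (hmin hy).trans hle

end Limit

section Converse

variable {𝒳 𝒴 Xh Yh : Type} [Fintype 𝒳] [Fintype 𝒴] [Fintype Xh] [Fintype Yh] {q : 𝒳 × 𝒴 → ℝ}
  {δ1 : 𝒳 → Xh → ℝ} {δ2 : 𝒴 → Yh → ℝ} {d1 d2 r : ℝ}

lemma max_condMI_mem_crFormulaSet (hq : IsPmf q) {p : 𝒳 × 𝒴 × (Xh × Yh) → ℝ}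
    (hp : p ∈ extensions (Xh × Yh) q) (h1 : ∑ t, p t * δ1 t.1 t.2.2.1 ≤ d1)
    (h2 : ∑ t, p t * δ2 t.2.1 t.2.2.2 ≤ d2) :
    max (condMI p) (condMI fun t : 𝒴 × 𝒳 × (Xh × Yh) => p (t.2.1, t.1, t.2.2)) ∈
      crFormulaSet q δ1 δ2 d1 d2 := by
  obtain ⟨W, hW, rfl⟩ := exists_joint_eq hq hp
  exact ⟨W, hW, (sum_joint_mul q W fun t => δ1 t.1 t.2.2.1).ge.trans h1,
    (sum_joint_mul q W fun t => δ2 t.2.1 t.2.2.2).ge.trans h2, rfl⟩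

/-- The two laws are those of the reconstruction pairs formed by the two receivers. -/
lemma exists_extensions_of_crAchievable (hq : IsPmf q) (h : CRAchievable q δ1 δ2 d1 d2 r)
    {ε : ℝ} (hε : 0 < ε) :
    ∃ p₁ ∈ extensions (Xh × Yh) q, ∃ p₂ ∈ extensions (Xh × Yh) q, dist p₁ p₂ ≤ ε ∧
      condMI p₁ ≤ r + ε ∧ condMI (fun t : 𝒴 × 𝒳 × (Xh × Yh) => p₂ (t.2.1, t.1, t.2.2)) ≤ r + ε ∧
      ∑ t, p₁ t * δ1 t.1 t.2.2.1 ≤ d1 + ε ∧ ∑ t, p₂ t * δ2 t.2.1 t.2.2.2 ≤ d2 + ε := by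
  obtain ⟨n, m, f, g1, g2, φ1, φ2, hn, hrate, hd1, hd2, herr1, herr2⟩ := h (ε / 2) (half_pos hε)
  have hiid := (isPmf_iid hq n).1
  set dec1 : Fin m × (Fin n → 𝒴) → Fin n → Xh × Yh := fun u i => (g1 u i, φ1 u i)
  set dec2 : Fin m × (Fin n → 𝒳) → Fin n → Xh × Yh := fun u i => (φ2 u i, g2 u i)
  have herr : prob (iid q n) (fun xy => dec1 (f xy, xy.2) ≠ dec2 (f xy, xy.1)) ≤ ε := by
    rw [← prob_not_eq_sum_ite] at herr1 herr2
    refine ((prob_mono hiid fun xy _ hne => ?_).trans (prob_or_le hiid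
      (fun xy => ¬φ2 (f xy, xy.1) = g1 (f xy, xy.2))
      fun xy => ¬φ1 (f xy, xy.2) = g2 (f xy, xy.1))).trans (by linarith)
    by_contra! hagree
    exact hne (funext fun i => Prod.ext (congrFun hagree.1 i).symm (congrFun hagree.2 i))
  refine ⟨averageLaw q fun xy => dec1 (f xy, xy.2),
    ⟨averageLaw_nonneg hq _, sum_averageLaw_thd hq hn _⟩,
    averageLaw q fun xy => dec2 (f xy, xy.1),
    ⟨averageLaw_nonneg hq _, sum_averageLaw_thd hq hn _⟩,
    (dist_pi_le_iff hε.le).2 fun t => (abs_averageLaw_sub_averageLaw_le hq _ _ t).trans herr,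
    (condMI_averageLaw_le hq hn f dec1).trans (by linarith), ?_, ?_, ?_⟩
  · simp only [← averageLaw_swap]
    exact (condMI_averageLaw_le (isPmf_swap hq) hn (fun yx => f yx.swap) dec2).trans (by linarith)
  · rw [sum_averageLaw_mul]
    exact hd1.trans (by linarith)
  · rw [sum_averageLaw_mul]
    exact hd2.trans (by linarith)

theorem exists_mem_crFormulaSet_le_of_crAchievable (hq : IsPmf q)
    (h : CRAchievable q δ1 δ2 d1 d2 r) : ∃ r' ∈ crFormulaSet q δ1 δ2 d1 d2, r' ≤ r := by
  have hswap : Continuous fun p : 𝒳 × 𝒴 × (Xh × Yh) → ℝ =>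
      condMI fun t : 𝒴 × 𝒳 × (Xh × Yh) => p (t.2.1, t.1, t.2.2) :=
    continuous_condMI.comp (by fun_prop)
  have hcondMI := continuous_condMI (α := 𝒳) (β := 𝒴) (γ := Xh × Yh)
  obtain ⟨⟨p, p'⟩, ⟨hp, -⟩, hle⟩ := exists_le_of_forall_exists_le_add (a := 0)
    ((isCompact_extensions (𝒵 := Xh × Yh) q).prod (isCompact_extensions q))
    (F := fun p => max (dist p.1 p.2) (max (condMI p.1 - r)
      (max (condMI (fun t : 𝒴 × 𝒳 × (Xh × Yh) => p.2 (t.2.1, t.1, t.2.2)) - r)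
        (max (∑ t, p.1 t * δ1 t.1 t.2.2.1 - d1) (∑ t, p.2 t * δ2 t.2.1 t.2.2.2 - d2)))))
    ((continuous_fst.dist continuous_snd).max (((hcondMI.comp continuous_fst).sub
      continuous_const).max (((hswap.comp continuous_snd).sub continuous_const).max
        ((by fun_prop : Continuous _).max (by fun_prop))))) fun ε hε => by
      obtain ⟨p₁, hp₁, p₂, hp₂, hdist, hI1, hI2, hd1, hd2⟩ :=
        exists_extensions_of_crAchievable hq h hε
      refine ⟨(p₁, p₂), ⟨hp₁, hp₂⟩, ?_⟩
      simp only [max_le_iff]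
      exact ⟨by linarith, by linarith, by linarith, by linarith, by linarith⟩
  simp only [max_le_iff, dist_le_zero, sub_nonpos] at hle
  obtain ⟨rfl, hI1, hI2, hd1, hd2⟩ := hle
  exact ⟨_, max_condMI_mem_crFormulaSet hq hp hd1 hd2, max_le hI1 hI2⟩

end Converse

section

variable {𝒳 𝒴 Xh Yh : Type} [Fintype 𝒳] [Fintype 𝒴] {q : 𝒳 × 𝒴 → ℝ}
  {δ1 : 𝒳 → Xh → ℝ} {δ2 : 𝒴 → Yh → ℝ} {d1 d2 r : ℝ}

lemma crAchievable_of_forall_exists_le_add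
    (h : ∀ ε > 0, ∃ r' ≤ r + ε, CRAchievable q δ1 δ2 d1 d2 r') : CRAchievable q δ1 δ2 d1 d2 r := by
  intro ε hε
  obtain ⟨r', hr', hach⟩ := h (ε / 2) (half_pos hε)
  obtain ⟨n, m, f, g1, g2, φ1, φ2, hn, hrate, hd1, hd2, herr1, herr2⟩ := hach (ε / 2) (half_pos hε)
  exact ⟨n, m, f, g1, g2, φ1, φ2, hn, by linarith, by linarith, by linarith, by linarith,
    by linarith⟩

variable [Fintype Xh] [Fintype Yh]

lemma nonneg_of_mem_crFormulaSet (hq : IsPmf q) (hr : r ∈ crFormulaSet q δ1 δ2 d1 d2) :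
    0 ≤ r := by
  obtain ⟨W, hW, -, -, rfl⟩ := hr
  exact le_max_of_le_left (condMI_nonneg (joint_nonneg hq hW))

lemma crFormulaSet_nonempty (hδ1 : ∀ x, ∃ xh, δ1 x xh = 0) (hδ2 : ∀ y, ∃ yh, δ2 y yh = 0)
    (hd1 : 0 ≤ d1) (hd2 : 0 ≤ d2) : (crFormulaSet q δ1 δ2 d1 d2).Nonempty := by
  choose u hu using hδ1
  choose v hv using hδ2
  exact ⟨_, fun xy z => if z = (u xy.1, v xy.2) then 1 else 0,
    fun xy => ⟨fun z => by positivity, by simp⟩,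
    by simpa [hu] using hd1, by simpa [hv] using hd2, rfl⟩

end

end TWR

open TWR in
theorem crrd_eq_single_letter_general {𝒳 𝒴 Xh Yh : Type} [Fintype 𝒳] [Fintype 𝒴] [Fintype Xh]
    [Fintype Yh] {q : 𝒳 × 𝒴 → ℝ} (hq : IsPmf q) {δ1 : 𝒳 → Xh → ℝ} {δ2 : 𝒴 → Yh → ℝ} {d1 d2 : ℝ}
    (hfeasible : (crFormulaSet q δ1 δ2 d1 d2).Nonempty) :
    IsLeast (crFormulaSet q δ1 δ2 d1 d2) (CRRD q δ1 δ2 d1 d2) := by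
  have hach : crFormulaSet q δ1 δ2 d1 d2 ⊆ {r | 0 ≤ r ∧ CRAchievable q δ1 δ2 d1 d2 r} :=
    fun r hr => ⟨nonneg_of_mem_crFormulaSet hq hr, crAchievable_of_mem_crFormulaSet hq hr⟩
  have hlower : CRRD q δ1 δ2 d1 d2 ∈ lowerBounds (crFormulaSet q δ1 δ2 d1 d2) :=
    fun r hr => csInf_le ⟨0, fun _ hr' => hr'.1⟩ (hach hr)
  have hattained : CRAchievable q δ1 δ2 d1 d2 (CRRD q δ1 δ2 d1 d2) :=
    crAchievable_of_forall_exists_le_add fun ε hε => by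
      obtain ⟨r, ⟨-, hr⟩, hlt⟩ := Real.lt_sInf_add_pos (hfeasible.mono hach) hε
      exact ⟨r, hlt.le, hr⟩
  obtain ⟨r, hr, hle⟩ := exists_mem_crFormulaSet_le_of_crAchievable hq hattained
  exact ⟨hle.antisymm (hlower hr) ▸ hr, hlower⟩

open TWR in
/-- Theorem 1: `R_CR(d1,d2)` equals the minimum over test
channels in `𝒫_{X̂Ŷ|XY}(d1,d2)` of `max{I(X;X̂,Ŷ|Y), I(Y;X̂,Ŷ|X)}`. -/
theorem crrd_eq_single_letter
    {𝒳 𝒴 Xh Yh : Type} [Fintype 𝒳] [Fintype 𝒴] [Fintype Xh] [Fintype Yh]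
    (q : 𝒳 × 𝒴 → ℝ) (hq : IsPmf q)
    (δ1 : 𝒳 → Xh → ℝ) (δ2 : 𝒴 → Yh → ℝ) (d1max d2max : ℝ)
    (hδ1 : ∀ x xh, 0 ≤ δ1 x xh ∧ δ1 x xh ≤ d1max)
    (hδ2 : ∀ y yh, 0 ≤ δ2 y yh ∧ δ2 y yh ≤ d2max)
    (hδ1n : ∀ x, ∃ xh, δ1 x xh = 0) (hδ2n : ∀ y, ∃ yh, δ2 y yh = 0)
    (d1 d2 : ℝ) (hd1 : 0 ≤ d1) (hd2 : 0 ≤ d2) :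
    CRRD q δ1 δ2 d1 d2 = sInf (crFormulaSet q δ1 δ2 d1 d2) :=
  (crrd_eq_single_letter_general hq
    (crFormulaSet_nonempty hδ1n hδ2n hd1 hd2)).csInf_eq.symm
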